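/- Let U_1, ..., U_n be i.i.d. U[0,1], let i_* = argmin_{1 ≤ i ≤ n} p_{(i)}, let μ and σ² be the mean and variance of a Beta(i_*, n - i_* + 1) random variable, and set τ = (μ - U_{(i_*)})/σ. Then for every fixed ε > 0, P( M_n^+ > (1-ε)/(√(2π) τ) · e^{-τ²/2} ) → 1 as n → ∞. -/

import Mathlib

open MeasureTheory Filter Set

noncomputable section

/-- Density of the Beta(a,b) distribution on [0,1]. -/
def betaPDF (a b x : ℝ) : ℝ :=
  x ^ (a - 1) * (1 - x) ^ (b - 1) / (Real.Gamma a * Real.Gamma b / Real.Gamma (a + b))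

/-- Regularized incomplete beta function `I_x(a,b) = P(Beta(a,b) < x)`. -/
def regIncBeta (a b x : ℝ) : ℝ := ∫ t in Set.Ioc (0:ℝ) x, betaPDF a b t

/-- The `i`-th order statistic (0-based) of the sample `u`. -/
def orderStat {n : ℕ} (u : Fin n → ℝ) (i : Fin n) : ℝ := u (Tuple.sort u i)

/-- `p_{(i)} = P(Beta(i, n-i+1) < u_{(i)})` (with 1-based index `i = (i : Fin n) + 1`). -/
def pOrd {n : ℕ} (u : Fin n → ℝ) (i : Fin n) : ℝ :=
  regIncBeta ((i : ℕ) + 1 : ℝ) ((n : ℝ) - (i : ℕ)) (orderStat u i)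

/-- One-sided exact Berk-Jones statistic `M_n^+`. -/
def MnPlus {n : ℕ} (u : Fin n → ℝ) : ℝ := ⨅ i, pOrd u i

/-- One-sided exact Berk-Jones statistic `M_n^-`. -/
def MnMinus {n : ℕ} (u : Fin n → ℝ) : ℝ := ⨅ i, (1 - pOrd u i)

/-- Two-sided exact Berk-Jones statistic `M_n`. -/
def Mn {n : ℕ} (u : Fin n → ℝ) : ℝ := min (MnPlus u) (MnMinus u)

/-- Joint law of `n` i.i.d. `U[0,1]` random variables (the null hypothesis). -/
def nullMeasure (n : ℕ) : Measure (Fin n → ℝ) :=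
  Measure.pi fun _ => MeasureTheory.volume.restrict (Set.Icc (0:ℝ) 1)

end

/-- Mean of the Beta(a,b) distribution. -/
noncomputable def betaMean (a b : ℝ) : ℝ := a / (a + b)

/-- Standard deviation of the Beta(a,b) distribution. -/
noncomputable def betaSD (a b : ℝ) : ℝ := Real.sqrt (a * b / ((a + b)^2 * (a + b + 1)))


/-! ### Binomial tail and incomplete beta function -/

/-- Binomial tail `P(Bin(i+k+1, x) ≥ i+1)`. -/
noncomputable def bF (i k : ℕ) (x : ℝ) : ℝ :=
  ∑ l ∈ Finset.range (k + 1),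
    ((i + k + 1).choose (i + 1 + l) : ℝ) * (x ^ (i + 1 + l) * (1 - x) ^ (k - l))

/-- The density of `Beta(i+1,k+1)`. -/
noncomputable def bf (i k : ℕ) (x : ℝ) : ℝ :=
  ((i + k + 1).factorial : ℝ) / (i.factorial * k.factorial) * (x ^ i * (1 - x) ^ k)

lemma bF_hasDerivAt (i k : ℕ) (x : ℝ) : HasDerivAt (bF i k) (bf i k x) x := by
  set D : ℕ → ℝ := fun l => ((i + k + 1 : ℕ) : ℝ) * ((i + k).choose (i + l) : ℝ) *
    (x ^ (i + l) * (1 - x) ^ (k - l)) with hD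
  have h1 : bf i k x = ∑ l ∈ Finset.range (k + 1), (D l - D (l + 1)) := by
    rw [Finset.sum_range_sub']
    have e1 : D (k + 1) = 0 := by
      simp only [hD]
      rw [Nat.choose_eq_zero_of_lt (by omega)]
      simp
    rw [e1, sub_zero]
    simp only [hD, bf]
    have h2 := Nat.add_choose_mul_factorial_mul_factorial i k
    have h3 : ((i + k).choose i : ℝ) * i.factorial * k.factorial = (i + k).factorial := by
      rw [Nat.choose_symm_add]
      exact_mod_cast h2
    rw [Nat.factorial_succ]
    have hi : (i.factorial : ℝ) ≠ 0 := by positivity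
    have hk : (k.factorial : ℝ) ≠ 0 := by positivity
    push_cast
    rw [← h3]
    field_simp
    simp
  rw [h1]
  unfold bF
  apply HasDerivAt.fun_sum
  intro l hl
  have hlk : l ≤ k := by simpa [Nat.lt_succ_iff] using hl
  have hd : HasDerivAt (fun y : ℝ => ((i + k + 1).choose (i + 1 + l) : ℝ) *
      (y ^ (i + 1 + l) * (1 - y) ^ (k - l)))
      (((i + k + 1).choose (i + 1 + l) : ℝ) *
       ((((i + 1 + l : ℕ) : ℝ) * x ^ (i + 1 + l - 1)) * (1 - x) ^ (k - l) +
        x ^ (i + 1 + l) * ((((k - l : ℕ) : ℝ) * (1 - x) ^ (k - l - 1)) * (-1)))) x := by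
    apply HasDerivAt.const_mul
    apply HasDerivAt.mul
    · exact hasDerivAt_pow _ x
    · exact ((hasDerivAt_id x).const_sub 1).pow _
  refine HasDerivAt.congr_deriv hd ?_
  symm
  simp only [hD]
  have c1 : (((i + k + 1 : ℕ) : ℝ) * ((i + k).choose (i + l) : ℝ)) =
      ((i + k + 1).choose (i + 1 + l) : ℝ) * ((i + 1 + l : ℕ) : ℝ) := by
    have := Nat.add_one_mul_choose_eq (i + k) (i + l)
    have e : i + l + 1 = i + 1 + l := by ring
    rw [e] at this
    exact_mod_cast this
  have c2 : (((i + k + 1 : ℕ) : ℝ) * ((i + k).choose (i + (l + 1)) : ℝ)) =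
      ((i + k + 1).choose (i + 1 + l) : ℝ) * ((k - l : ℕ) : ℝ) := by
    have := Nat.choose_mul_succ_eq (i + k) (i + (l + 1))
    have e : i + k + 1 - (i + (l + 1)) = k - l := by omega
    rw [e, show i + (l + 1) = i + 1 + l by ring] at this
    rw [show i + (l + 1) = i + 1 + l by ring]
    rw [mul_comm]
    exact_mod_cast this
  rw [c1, c2]
  have e1 : i + 1 + l - 1 = i + l := by omega
  have e2 : k - (l + 1) = k - l - 1 := by omega
  have e3 : i + (l + 1) = i + 1 + l := by omega
  rw [e1, e2, e3]
  ring

lemma bF_zero (i k : ℕ) : bF i k 0 = 0 := by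
  unfold bF
  apply Finset.sum_eq_zero
  intro l _
  rw [zero_pow (by omega)]
  simp

lemma bF_one (i k : ℕ) : bF i k 1 = 1 := by
  unfold bF
  rw [Finset.sum_eq_single k]
  · rw [show i + 1 + k = i + k + 1 by ring]
    simp
  · intro l hl hlk
    have : l < k + 1 := by simpa using hl
    rw [sub_self, zero_pow (by omega)]
    simp
  · simp

lemma bf_pos (i k : ℕ) {x : ℝ} (h0 : 0 < x) (h1 : x < 1) : 0 < bf i k x := by
  unfold bf
  have : 0 < 1 - x := by linarith
  positivity

lemma bF_continuous (i k : ℕ) : Continuous (bF i k) :=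
  continuous_iff_continuousAt.2 fun x => (bF_hasDerivAt i k x).continuousAt

lemma bf_continuous (i k : ℕ) : Continuous (bf i k) := by
  unfold bf
  fun_prop

lemma bF_strictMono (i k : ℕ) : StrictMonoOn (bF i k) (Set.Icc 0 1) := by
  apply strictMonoOn_of_deriv_pos (convex_Icc 0 1) (bF_continuous i k).continuousOn
  intro x hx
  rw [interior_Icc] at hx
  rw [(bF_hasDerivAt i k x).deriv]
  exact bf_pos i k hx.1 hx.2

lemma regIncBeta_eq (i k : ℕ) {x : ℝ} (h0 : 0 ≤ x) :
    regIncBeta ((i : ℝ) + 1) ((k : ℝ) + 1) x = bF i k x := by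
  unfold regIncBeta
  have hpdf : ∀ t, betaPDF ((i : ℝ) + 1) ((k : ℝ) + 1) t = bf i k t := by
    intro t
    unfold betaPDF bf
    rw [Real.Gamma_nat_eq_factorial, Real.Gamma_nat_eq_factorial]
    rw [show (i : ℝ) + 1 + (k + 1) = ((i + k + 1 : ℕ) : ℝ) + 1 by push_cast; ring]
    rw [Real.Gamma_nat_eq_factorial]
    rw [add_sub_cancel_right, add_sub_cancel_right, Real.rpow_natCast, Real.rpow_natCast]
    have hi : (i.factorial : ℝ) ≠ 0 := by positivity
    have hk : (k.factorial : ℝ) ≠ 0 := by positivity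
    field_simp
  simp only [hpdf]
  rw [← intervalIntegral.integral_of_le h0]
  rw [intervalIntegral.integral_eq_sub_of_hasDerivAt (f := bF i k)]
  · rw [bF_zero, sub_zero]
  · intro y _
    exact bF_hasDerivAt i k y
  · exact (bf_continuous i k).intervalIntegrable _ _

/-- Chernoff bound. -/
lemma bF_chernoff (i k : ℕ) {x z : ℝ} (h0 : 0 ≤ x) (h1 : x ≤ 1) (hz : 1 ≤ z) :
    z ^ (i + 1) * bF i k x ≤ (1 - x + x * z) ^ (i + k + 1) := by
  have hx : 0 ≤ 1 - x := by linarith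
  have hz0 : 0 ≤ z := by linarith
  have e : (1 - x + x * z) ^ (i + k + 1) = ∑ j ∈ Finset.range ((i + 1) + (k + 1)),
      (x * z) ^ j * (1 - x) ^ (i + k + 1 - j) * ((i + k + 1).choose j : ℝ) := by
    rw [add_comm (1 - x), add_pow, show i + k + 1 + 1 = (i + 1) + (k + 1) by ring]
  rw [e, Finset.sum_range_add]
  have hA : 0 ≤ ∑ j ∈ Finset.range (i + 1),
      (x * z) ^ j * (1 - x) ^ (i + k + 1 - j) * ((i + k + 1).choose j : ℝ) := by
    apply Finset.sum_nonneg
    intros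
    positivity
  have hB : z ^ (i + 1) * bF i k x ≤ ∑ l ∈ Finset.range (k + 1),
      (x * z) ^ (i + 1 + l) * (1 - x) ^ (i + k + 1 - (i + 1 + l)) *
        ((i + k + 1).choose (i + 1 + l) : ℝ) := by
    unfold bF
    rw [Finset.mul_sum]
    apply Finset.sum_le_sum
    intro l hl
    rw [show i + k + 1 - (i + 1 + l) = k - l by omega]
    have : z ^ (i + 1) ≤ z ^ (i + 1 + l) := pow_le_pow_right₀ hz (by omega)
    rw [mul_pow]
    calc z ^ (i + 1) * (((i + k + 1).choose (i + 1 + l) : ℝ) * (x ^ (i + 1 + l) * (1 - x) ^ (k - l)))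
        ≤ z ^ (i + 1 + l) *
          (((i + k + 1).choose (i + 1 + l) : ℝ) * (x ^ (i + 1 + l) * (1 - x) ^ (k - l))) := by
          apply mul_le_mul_of_nonneg_right this
          positivity
      _ = _ := by ring
  linarith

/-! ### Order statistics and counts -/

lemma orderStat_le_iff {n : ℕ} (u : Fin n → ℝ) (i : Fin n) (x : ℝ) :
    orderStat u i ≤ x ↔ (i : ℕ) < (Finset.univ.filter (fun j => u j ≤ x)).card := by
  have h := Tuple.lt_card_le_iff_apply_le_of_monotone (f := u ∘ Tuple.sort u) (a := x) (j := i)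
    (Tuple.monotone_sort u)
  have e : (Finset.univ.filter (fun j => u j ≤ x)).card =
      (Finset.univ.filter (fun j => (u ∘ Tuple.sort u) j ≤ x)).card := by
    symm
    apply Finset.card_bij (fun j _ => Tuple.sort u j)
    · intro a ha
      simpa using ha
    · intro a _ b _ hab
      exact (Tuple.sort u).injective hab
    · intro b hb
      exact ⟨(Tuple.sort u).symm b, by simpa using hb, by simp⟩
  rw [e]
  exact h.symm

instance unif_prob : IsProbabilityMeasure (MeasureTheory.volume.restrict (Set.Icc (0:ℝ) 1)) :=
  ⟨by simp⟩

instance nullMeasure_prob (n : ℕ) : IsProbabilityMeasure (nullMeasure n) := by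
  unfold nullMeasure
  infer_instance

lemma unif_Iic {x : ℝ} (h1 : x ≤ 1) :
    (MeasureTheory.volume.restrict (Set.Icc (0:ℝ) 1)) (Set.Iic x) = ENNReal.ofReal x := by
  rw [Measure.restrict_apply measurableSet_Iic]
  have : Set.Iic x ∩ Set.Icc 0 1 = Set.Icc 0 x := by
    ext t
    simp only [Set.mem_inter_iff, Set.mem_Iic, Set.mem_Icc]
    constructor
    · rintro ⟨a, b, c⟩
      exact ⟨b, a⟩
    · rintro ⟨a, b⟩
      exact ⟨b, a, b.trans h1⟩
  rw [this, Real.volume_Icc, sub_zero]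

lemma unif_Ioi {x : ℝ} (h0 : 0 ≤ x) :
    (MeasureTheory.volume.restrict (Set.Icc (0:ℝ) 1)) (Set.Ioi x) = ENNReal.ofReal (1 - x) := by
  rw [Measure.restrict_apply measurableSet_Ioi]
  have : Set.Ioi x ∩ Set.Icc 0 1 = Set.Ioc x 1 := by
    ext t
    simp only [Set.mem_inter_iff, Set.mem_Ioi, Set.mem_Icc, Set.mem_Ioc]
    constructor
    · rintro ⟨a, b, c⟩
      exact ⟨a, c⟩
    · rintro ⟨a, b⟩
      exact ⟨a, by linarith, b⟩
  rw [this, Real.volume_Ioc]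

lemma nullMeasure_exact {n : ℕ} (S : Finset (Fin n)) {x : ℝ} (h0 : 0 ≤ x) (h1 : x ≤ 1) :
    nullMeasure n {u | Finset.univ.filter (fun j => u j ≤ x) = S} ≤
      ENNReal.ofReal (x ^ S.card * (1 - x) ^ (n - S.card)) := by
  have hx : 0 ≤ 1 - x := by linarith
  have hsub : {u : Fin n → ℝ | Finset.univ.filter (fun j => u j ≤ x) = S} ⊆
      Set.pi Set.univ (fun j => if j ∈ S then Set.Iic x else Set.Ioi x) := by
    intro u hu j _
    have hu' : Finset.univ.filter (fun j => u j ≤ x) = S := hu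
    by_cases hj : j ∈ S
    · simp only [hj, if_true]
      rw [← hu'] at hj
      simpa using hj
    · simp only [hj, if_false]
      rw [← hu'] at hj
      simpa using hj
  refine (measure_mono hsub).trans ?_
  unfold nullMeasure
  rw [Measure.pi_pi]
  have : ∀ j : Fin n, (MeasureTheory.volume.restrict (Set.Icc (0:ℝ) 1))
      (if j ∈ S then Set.Iic x else Set.Ioi x) =
      if j ∈ S then ENNReal.ofReal x else ENNReal.ofReal (1 - x) := by
    intro j
    split_ifs
    · exact unif_Iic h1
    · exact unif_Ioi h0
  simp only [this]
  rw [Finset.prod_ite, Finset.prod_const, Finset.prod_const]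
  rw [ENNReal.ofReal_mul (by positivity), ENNReal.ofReal_pow h0, ENNReal.ofReal_pow hx]
  have c1 : (Finset.univ.filter (fun j => j ∈ S)).card = S.card := by simp
  have c2 : (Finset.univ.filter (fun j => j ∉ S)).card = n - S.card := by
    have : Finset.univ.filter (fun j => j ∉ S) = Sᶜ := by
      ext
      simp
    rw [this, Finset.card_compl, Fintype.card_fin]
  rw [c1, c2]

lemma nullMeasure_cnt {n i k : ℕ} (hn : n = i + k + 1) {x : ℝ} (h0 : 0 ≤ x) (h1 : x ≤ 1) :
    nullMeasure n {u | i < (Finset.univ.filter (fun j => u j ≤ x)).card} ≤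
      ENNReal.ofReal (bF i k x) := by
  have hx : 0 ≤ 1 - x := by linarith
  have hsub : {u : Fin n → ℝ | i < (Finset.univ.filter (fun j => u j ≤ x)).card} ⊆
      ⋃ S ∈ (Finset.univ : Finset (Fin n)).powerset.filter (fun S => i < S.card),
        {u | Finset.univ.filter (fun j => u j ≤ x) = S} := by
    intro u hu
    simp only [Set.mem_iUnion]
    exact ⟨Finset.univ.filter (fun j => u j ≤ x), by simpa using hu, rfl⟩
  refine (measure_mono hsub).trans ((measure_biUnion_finset_le _ _).trans ?_)
  refine (Finset.sum_le_sum (fun S _ => nullMeasure_exact S h0 h1)).trans ?_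
  rw [← ENNReal.ofReal_sum_of_nonneg (fun S _ => by positivity)]
  apply ENNReal.ofReal_le_ofReal
  rw [Finset.sum_filter]
  rw [Finset.sum_powerset_apply_card
    (f := fun m => if i < m then x ^ m * (1 - x) ^ (n - m) else (0:ℝ))]
  rw [Finset.card_univ, Fintype.card_fin, hn, show i + k + 1 + 1 = (i + 1) + (k + 1) by ring,
    Finset.sum_range_add]
  rw [Finset.sum_eq_zero, zero_add]
  · unfold bF
    apply le_of_eq
    apply Finset.sum_congr rfl
    intro l _
    rw [if_pos (by omega), nsmul_eq_mul, show i + k + 1 - (i + 1 + l) = k - l by omega]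
  · intro m hm
    have : m < i + 1 := by simpa using hm
    rw [if_neg (by omega), smul_zero]

lemma orderStat_meas {n : ℕ} (i : Fin n) {k : ℕ} (hn : n = i + k + 1) {x : ℝ} (h0 : 0 ≤ x)
    (h1 : x ≤ 1) :
    nullMeasure n {u | orderStat u i ≤ x} ≤ ENNReal.ofReal (bF i k x) := by
  simp only [orderStat_le_iff]
  exact nullMeasure_cnt hn h0 h1

lemma nullMeasure_cube (n : ℕ) : nullMeasure n {u | ¬ ∀ j, u j ∈ Set.Icc (0:ℝ) 1} = 0 := by
  have : ∀ᵐ u ∂(nullMeasure n), ∀ j, u j ∈ Set.Icc (0:ℝ) 1 := by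
    rw [ae_all_iff]
    intro j
    have h : ∀ᵐ t ∂(MeasureTheory.volume.restrict (Set.Icc (0:ℝ) 1)), t ∈ Set.Icc (0:ℝ) 1 :=
      ae_restrict_mem measurableSet_Icc
    unfold nullMeasure
    exact (Measure.quasiMeasurePreserving_eval
      (fun _ : Fin n => MeasureTheory.volume.restrict (Set.Icc (0:ℝ) 1)) j).ae h
  exact this

lemma pOrd_eq {n : ℕ} (u : Fin n → ℝ) (hu : ∀ j, u j ∈ Set.Icc (0:ℝ) 1) (i : Fin n) {k : ℕ}
    (hn : n = i + k + 1) : pOrd u i = bF i k (orderStat u i) := by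
  unfold pOrd
  have : (n : ℝ) - (i : ℕ) = (k : ℝ) + 1 := by
    have : (n : ℝ) = ((i : ℕ) : ℝ) + k + 1 := by exact_mod_cast hn
    linarith
  rw [this]
  exact regIncBeta_eq _ _ (hu _).1

/-- `p_{(i)}` is (super)uniform. -/
lemma pOrd_meas {n : ℕ} (i : Fin n) {k : ℕ} (hn : n = i + k + 1) {d : ℝ} (h0 : 0 ≤ d)
    (h1 : d ≤ 1) :
    nullMeasure n {u | (∀ j, u j ∈ Set.Icc (0:ℝ) 1) ∧ pOrd u i ≤ d} ≤ ENNReal.ofReal d := by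
  have hd : d ∈ Set.Icc (bF i k 0) (bF i k 1) := by
    rw [bF_zero, bF_one]
    exact ⟨h0, h1⟩
  obtain ⟨x, hx, hxd⟩ := intermediate_value_Icc (zero_le_one' ℝ)
    (bF_continuous i k).continuousOn hd
  rw [← hxd]
  refine (measure_mono ?_).trans (orderStat_meas i hn hx.1 hx.2)
  rintro u ⟨hu, hp⟩
  rw [pOrd_eq u hu i hn] at hp
  exact ((bF_strictMono i k).le_iff_le (hu _) hx).1 hp

/-! ### Second moment argument -/

noncomputable def gX (z x t : ℝ) : ℝ := (1 + z * Set.indicator (Set.Iic x) 1 t) / (1 + z * x)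

noncomputable def XX {n : ℕ} (z x : ℝ) (u : Fin n → ℝ) : ℝ := ∏ i, gX z x (u i)

lemma XX_eq {n : ℕ} (z x : ℝ) (u : Fin n → ℝ) :
    XX z x u = (1 + z) ^ (Finset.univ.filter (fun j => u j ≤ x)).card / (1 + z * x) ^ n := by
  unfold XX gX
  rw [Finset.prod_div_distrib, Finset.prod_const, Finset.card_univ, Fintype.card_fin]
  congr 1
  have : ∀ j, 1 + z * Set.indicator (Set.Iic x) 1 (u j) = if u j ≤ x then (1 + z) else 1 := by
    intro j
    by_cases h : u j ≤ x
    · simp [h]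
    · simp [h]
  simp only [this]
  rw [Finset.prod_ite, Finset.prod_const, Finset.prod_const, one_pow, mul_one]

lemma ind_integrable (x : ℝ) :
    Integrable (Set.indicator (Set.Iic x) (1 : ℝ → ℝ))
      (MeasureTheory.volume.restrict (Set.Icc (0:ℝ) 1)) := by
  apply (integrable_const (1:ℝ)).indicator measurableSet_Iic

lemma ind_integral {x : ℝ} (h0 : 0 ≤ x) (h1 : x ≤ 1) :
    ∫ t, Set.indicator (Set.Iic x) (1 : ℝ → ℝ) t
      ∂(MeasureTheory.volume.restrict (Set.Icc (0:ℝ) 1)) = x := by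
  rw [integral_indicator_one measurableSet_Iic, Measure.real, unif_Iic h1,
    ENNReal.toReal_ofReal h0]

lemma gX_integrable (z x : ℝ) :
    Integrable (gX z x) (MeasureTheory.volume.restrict (Set.Icc (0:ℝ) 1)) := by
  unfold gX
  exact ((integrable_const (1:ℝ)).add ((ind_integrable x).const_mul z)).div_const _

lemma gX_integral {z x : ℝ} (hz : 0 ≤ z) (h0 : 0 ≤ x) (h1 : x ≤ 1) :
    ∫ t, gX z x t ∂(MeasureTheory.volume.restrict (Set.Icc (0:ℝ) 1)) = 1 := by
  unfold gX
  rw [integral_div, integral_add (integrable_const _) ((ind_integrable x).const_mul z),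
    integral_const_mul, ind_integral h0 h1]
  have : 1 + z * x ≠ 0 := by positivity
  simp [this]

lemma gX_mul (z1 x1 z2 x2 : ℝ) (h : x1 ≤ x2) (t : ℝ) : gX z1 x1 t * gX z2 x2 t =
    (1 + (z1 + z1 * z2) * Set.indicator (Set.Iic x1) 1 t + z2 * Set.indicator (Set.Iic x2) 1 t) /
      ((1 + z1 * x1) * (1 + z2 * x2)) := by
  unfold gX
  rw [div_mul_div_comm]
  congr 1
  by_cases h1 : t ≤ x1
  · have h2 : t ≤ x2 := h1.trans h
    simp [h1, h2]
    ring
  · simp [h1]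

lemma gX_mul_integrable_aux (z1 x1 z2 x2 : ℝ) (h : x1 ≤ x2) :
    Integrable (fun t => gX z1 x1 t * gX z2 x2 t)
      (MeasureTheory.volume.restrict (Set.Icc (0:ℝ) 1)) := by
  simp only [gX_mul z1 x1 z2 x2 h]
  exact (((integrable_const (1:ℝ)).add ((ind_integrable x1).const_mul _)).add
    ((ind_integrable x2).const_mul _)).div_const _

lemma gX_mul_integrable (z1 x1 z2 x2 : ℝ) :
    Integrable (fun t => gX z1 x1 t * gX z2 x2 t)
      (MeasureTheory.volume.restrict (Set.Icc (0:ℝ) 1)) := by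
  rcases le_total x1 x2 with h | h
  · exact gX_mul_integrable_aux z1 x1 z2 x2 h
  · simp only [mul_comm (gX z1 x1 _)]
    exact gX_mul_integrable_aux z2 x2 z1 x1 h

lemma gX_mul_integral {z1 x1 z2 x2 : ℝ} (hz1 : 0 ≤ z1) (hz2 : 0 ≤ z2) (h0 : 0 ≤ x1)
    (h : x1 ≤ x2) (h1 : x2 ≤ 1) :
    ∫ t, gX z1 x1 t * gX z2 x2 t ∂(MeasureTheory.volume.restrict (Set.Icc (0:ℝ) 1)) ≤
      Real.exp (z1 * z2 * x1) := by
  have hx2 : 0 ≤ x2 := h0.trans h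
  have i1 := (integrable_const (1:ℝ) (μ := MeasureTheory.volume.restrict (Set.Icc (0:ℝ) 1)))
  have i2 : Integrable (fun t => 1 + (z1 + z1 * z2) * Set.indicator (Set.Iic x1) (1 : ℝ → ℝ) t)
      (MeasureTheory.volume.restrict (Set.Icc (0:ℝ) 1)) :=
    i1.add ((ind_integrable x1).const_mul _)
  simp only [gX_mul z1 x1 z2 x2 h]
  rw [integral_div, integral_add i2
      ((ind_integrable x2).const_mul _), integral_add i1 ((ind_integrable x1).const_mul _),
    integral_const_mul, integral_const_mul, ind_integral h0 (h.trans h1), ind_integral hx2 h1]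
  have e := Real.add_one_le_exp (z1 * z2 * x1)
  refine le_trans ?_ e
  rw [div_le_iff₀ (by positivity)]
  simp
  have p1 : 0 ≤ z1 * z2 * x1 := by positivity
  have p2 : 0 ≤ z1 * x1 := by positivity
  have p3 : 0 ≤ z2 * x2 := by positivity
  have p4 : 0 ≤ z1 * x1 * (z2 * x2) := by positivity
  have p5 := mul_nonneg p1 p2
  have p6 := mul_nonneg p1 p3
  have p7 := mul_nonneg p1 p4
  nlinarith

lemma XX_integrable {n : ℕ} (z x : ℝ) : Integrable (XX (n := n) z x) (nullMeasure n) := by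
  unfold nullMeasure XX
  exact Integrable.fintype_prod (fun _ => gX_integrable z x)

lemma XX_mul_integrable {n : ℕ} (z1 x1 z2 x2 : ℝ) :
    Integrable (fun u : Fin n → ℝ => XX z1 x1 u * XX z2 x2 u) (nullMeasure n) := by
  unfold nullMeasure XX
  simp only [← Finset.prod_mul_distrib]
  exact Integrable.fintype_prod (f := fun _ t => gX z1 x1 t * gX z2 x2 t)
    (fun _ => gX_mul_integrable z1 x1 z2 x2)

lemma XX_integral {n : ℕ} {z x : ℝ} (hz : 0 ≤ z) (h0 : 0 ≤ x) (h1 : x ≤ 1) :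
    ∫ u, XX (n := n) z x u ∂(nullMeasure n) = 1 := by
  unfold nullMeasure XX
  rw [integral_fintype_prod_eq_pow, gX_integral hz h0 h1, one_pow]

lemma XX_mul_integral {n : ℕ} {z1 x1 z2 x2 : ℝ} (hz1 : 0 ≤ z1) (hz2 : 0 ≤ z2) (h0 : 0 ≤ x1)
    (h : x1 ≤ x2) (h1 : x2 ≤ 1) :
    ∫ u : Fin n → ℝ, XX z1 x1 u * XX z2 x2 u ∂(nullMeasure n) ≤
      Real.exp (n * (z1 * z2 * x1)) := by
  unfold nullMeasure XX
  simp only [← Finset.prod_mul_distrib]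
  rw [integral_fintype_prod_eq_pow (f := fun t => gX z1 x1 t * gX z2 x2 t), Fintype.card_fin,
    Real.exp_nat_mul]
  apply pow_le_pow_left₀
  · apply integral_nonneg
    intro t
    have g0 : ∀ z x, 0 ≤ z → 0 ≤ x → 0 ≤ gX z x t := by
      intro z x hz hx
      unfold gX
      have : (0:ℝ) ≤ Set.indicator (Set.Iic x) 1 t := Set.indicator_nonneg (by simp) _
      positivity
    exact mul_nonneg (g0 _ _ hz1 h0) (g0 _ _ hz2 (h0.trans h))
  · exact gX_mul_integral hz1 hz2 h0 h h1

lemma second_moment {n J : ℕ} (hJ : 0 < J) (z x : ℕ → ℝ) (hz : ∀ j < J, 0 ≤ z j)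
    (h0 : ∀ j < J, 0 ≤ x j) (h1 : ∀ j < J, x j ≤ 1) (hmono : ∀ j < J, ∀ l < J, j ≤ l → x j ≤ x l)
    (e0 e1 : ℝ) (he1 : 0 ≤ e1)
    (hd : ∀ j < J, n * (z j * z j * x j) ≤ e0)
    (ho : ∀ j < J, ∀ l < J, j < l → n * (z j * z l * x j) ≤ e1) :
    nullMeasure n {u | ∀ j < J, XX (z j) (x j) u ≤ 1 / 2} ≤
      ENNReal.ofReal (4 * (Real.exp e0 / J + (Real.exp e1 - 1))) := by
  set S : (Fin n → ℝ) → ℝ := fun u => ∑ j ∈ Finset.range J, (XX (z j) (x j) u - 1) with hS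
  have hJ' : (0:ℝ) < J := by exact_mod_cast hJ
  have hsq : ∀ u, S u ^ 2 = ∑ j ∈ Finset.range J, ∑ l ∈ Finset.range J,
      (XX (z j) (x j) u * XX (z l) (x l) u - XX (z j) (x j) u - XX (z l) (x l) u + 1) := by
    intro u
    rw [sq, hS]
    simp only
    rw [Finset.sum_mul_sum]
    refine Finset.sum_congr rfl fun j _ => Finset.sum_congr rfl fun l _ => ?_
    ring
  have hSint1 : ∀ j l, Integrable (fun u : Fin n → ℝ => XX (z j) (x j) u * XX (z l) (x l) u -
      XX (z j) (x j) u - XX (z l) (x l) u + 1) (nullMeasure n) := by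
    intro j l
    exact (((XX_mul_integrable _ _ _ _).sub (XX_integrable _ _)).sub (XX_integrable _ _)).add
      (integrable_const _)
  have hSint : Integrable (fun u => S u ^ 2) (nullMeasure n) := by
    simp only [hsq]
    exact integrable_finsetSum _ fun j _ => integrable_finsetSum _ fun l _ => hSint1 j l
  have hval : ∫ u, S u ^ 2 ∂(nullMeasure n) ≤ J ^ 2 * (Real.exp e1 - 1) + J * Real.exp e0 := by
    simp only [hsq]
    rw [integral_finsetSum _ (fun j _ => integrable_finsetSum _ fun l _ => hSint1 j l)]
    have hb : ∀ j ∈ Finset.range J, ∀ l ∈ Finset.range J,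
        ∫ u : Fin n → ℝ, (XX (z j) (x j) u * XX (z l) (x l) u -
      XX (z j) (x j) u - XX (z l) (x l) u + 1) ∂(nullMeasure n) ≤ (Real.exp e1 - 1) +
        if j = l then Real.exp e0 else 0 := by
      intro j hj l hl
      have hj : j < J := by simpa using hj
      have hl : l < J := by simpa using hl
      have j1 : Integrable (fun u : Fin n → ℝ => XX (z j) (x j) u * XX (z l) (x l) u -
          XX (z j) (x j) u) (nullMeasure n) := (XX_mul_integrable _ _ _ _).sub (XX_integrable _ _)
      have j2 : Integrable (fun u : Fin n → ℝ => XX (z j) (x j) u * XX (z l) (x l) u -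
          XX (z j) (x j) u - XX (z l) (x l) u) (nullMeasure n) := j1.sub (XX_integrable _ _)
      rw [integral_add j2 (integrable_const _),
        integral_sub j1 (XX_integrable _ _),
        integral_sub (XX_mul_integrable _ _ _ _) (XX_integrable _ _),
        XX_integral (hz j hj) (h0 j hj) (h1 j hj), XX_integral (hz l hl) (h0 l hl) (h1 l hl)]
      have hc : ∫ _u : Fin n → ℝ, (1:ℝ) ∂(nullMeasure n) = 1 := by simp
      rw [hc]
      have hee : 1 ≤ Real.exp e1 := Real.one_le_exp he1
      rcases lt_trichotomy j l with h | h | h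
      · have := XX_mul_integral (n := n) (hz j hj) (hz l hl) (h0 j hj) (hmono j hj l hl h.le)
          (h1 l hl)
        have h2 := Real.exp_le_exp.2 (ho j hj l hl h)
        rw [if_neg h.ne]
        linarith
      · subst h
        have := XX_mul_integral (n := n) (hz j hj) (hz j hj) (h0 j hj) le_rfl (h1 j hj)
        have h2 := Real.exp_le_exp.2 (hd j hj)
        rw [if_pos rfl]
        linarith
      · have := XX_mul_integral (n := n) (hz l hl) (hz j hj) (h0 l hl) (hmono l hl j hj h.le)
          (h1 j hj)
        have h2 := Real.exp_le_exp.2 (ho l hl j hj h)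
        rw [if_neg h.ne']
        simp only [mul_comm (XX (z j) (x j) _)]
        linarith
    calc _ ≤ ∑ j ∈ Finset.range J, ∑ l ∈ Finset.range J, ((Real.exp e1 - 1) +
        if j = l then Real.exp e0 else 0) := by
          apply Finset.sum_le_sum
          intro j hj
          rw [integral_finsetSum _ (fun l _ => hSint1 j l)]
          exact Finset.sum_le_sum (hb j hj)
      _ = _ := by
          simp only [Finset.sum_add_distrib, Finset.sum_const, Finset.card_range, nsmul_eq_mul,
            Finset.sum_ite_eq]
          rw [Finset.sum_congr rfl (fun j hj => if_pos hj)]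
          simp
          ring
  have hmarkov := mul_meas_ge_le_integral_of_nonneg (μ := nullMeasure n) (f := fun u => S u ^ 2)
    (Eventually.of_forall fun u => sq_nonneg _) hSint ((J:ℝ) ^ 2 / 4)
  have hsub : {u : Fin n → ℝ | ∀ j < J, XX (z j) (x j) u ≤ 1 / 2} ⊆
      {u | (J:ℝ) ^ 2 / 4 ≤ S u ^ 2} := by
    intro u hu
    have h : S u ≤ -(J / 2) := by
      calc S u ≤ ∑ j ∈ Finset.range J, (-(1/2) : ℝ) := by
            apply Finset.sum_le_sum
            intro j hj
            have := hu j (by simpa using hj)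
            linarith
        _ = _ := by
            simp
            ring
    show (J:ℝ) ^ 2 / 4 ≤ S u ^ 2
    nlinarith
  refine (measure_mono hsub).trans ?_
  rw [← ENNReal.ofReal_toReal (measure_ne_top (nullMeasure n) {u | (J:ℝ) ^ 2 / 4 ≤ S u ^ 2})]
  apply ENNReal.ofReal_le_ofReal
  have h3 := hmarkov.trans hval
  rw [Measure.real] at h3
  have hJ2 : (0:ℝ) < (J:ℝ) ^ 2 / 4 := by positivity
  rw [← mul_le_mul_iff_right₀ hJ2]
  refine h3.trans (le_of_eq ?_)
  field_simp
  ring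

/-! ### `M_n^+` tends to zero in probability -/

lemma log_one_add_ge {y : ℝ} (hy : 0 ≤ y) : y - y ^ 2 / 2 ≤ Real.log (1 + y) := by
  refine le_trans ?_ (Real.le_log_one_add_of_nonneg hy)
  rw [le_div_iff₀ (by linarith)]
  nlinarith [pow_nonneg hy 3]

lemma exp_le_quad {y : ℝ} (h0 : 0 ≤ y) (h1 : y ≤ 1) : Real.exp y ≤ 1 + y + y ^ 2 := by
  have := Real.abs_exp_sub_one_sub_id_le (x := y) (by rw [abs_of_nonneg h0]; exact h1)
  have := (abs_le.1 this).2
  linarith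

lemma MnPlus_le {n : ℕ} (u : Fin n → ℝ) (i : Fin n) : MnPlus u ≤ pOrd u i :=
  ciInf_le (Set.finite_range _).bddBelow i

lemma bF_small {n i k : ℕ} (hn : n = i + k + 1) {w c : ℝ} (hw : 0 < w) (hc : 0 ≤ c)
    (hcw : c ≤ 2 * w) (hi : w ^ 2 + c * w ≤ (i : ℝ) + 1) (hx1 : w ^ 2 / n ≤ 1) :
    bF i k (w ^ 2 / n) ≤ Real.exp (-(c ^ 2 / 4)) := by
  have hnpos : (0:ℝ) < n := by
    rw [hn]
    positivity
  set x := w ^ 2 / (n:ℝ) with hx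
  have hx0 : 0 ≤ x := by positivity
  set e := c / (2 * w) with he
  have he0 : 0 ≤ e := by positivity
  have he1 : e ≤ 1 := by
    rw [he, div_le_one (by positivity)]
    exact hcw
  have hz : 1 ≤ Real.exp e := Real.one_le_exp he0
  have h := bF_chernoff i k hx0 hx1 hz
  rw [← hn] at h
  have h2 : (1 - x + x * Real.exp e) ^ n ≤ Real.exp (w ^ 2 * (Real.exp e - 1)) := by
    have : w ^ 2 * (Real.exp e - 1) = n * (x * (Real.exp e - 1)) := by
      rw [hx]
      field_simp
    rw [this, Real.exp_nat_mul]
    apply pow_le_pow_left₀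
    · nlinarith
    · have := Real.add_one_le_exp (x * (Real.exp e - 1))
      linarith
  have h3 : Real.exp (((i:ℝ) + 1) * e) * bF i k x ≤ Real.exp (w ^ 2 * (Real.exp e - 1)) := by
    refine le_trans ?_ h2
    refine le_trans (le_of_eq ?_) h
    rw [← Real.exp_nat_mul]
    push_cast
    rfl
  have h4 : bF i k x ≤ Real.exp (w ^ 2 * (Real.exp e - 1) - ((i:ℝ) + 1) * e) := by
    rw [Real.exp_sub, le_div_iff₀ (Real.exp_pos _)]
    linarith
  refine h4.trans (Real.exp_le_exp.2 ?_)
  have h5 := exp_le_quad he0 he1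
  have hew : e * w = c / 2 := by
    rw [he]
    field_simp
  have h6 : (w ^ 2 + c * w) * e ≤ ((i:ℝ) + 1) * e := mul_le_mul_of_nonneg_right hi he0
  have h7 : w ^ 2 * (Real.exp e - 1) ≤ w ^ 2 * (e + e ^ 2) := by
    apply mul_le_mul_of_nonneg_left _ (by positivity)
    linarith
  have h8 : w ^ 2 * (e + e ^ 2) - (w ^ 2 + c * w) * e = (e * w) ^ 2 - c * (e * w) := by ring
  rw [hew] at h8
  nlinarith

lemma XX_small {n : ℕ} (hn : 0 < n) {w c th z : ℝ} (hw : 0 < w) (hth : th = 2 * c + 2)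
    (hc : 0 ≤ c) (hz : z = Real.exp (th / w) - 1) (hn2 : w ^ 4 * z ^ 2 ≤ n) (u : Fin n → ℝ)
    (hcnt : ((Finset.univ.filter (fun j => u j ≤ w ^ 2 / n)).card : ℝ) ≤ w ^ 2 + c * w) :
    XX z (w ^ 2 / n) u ≤ 1 / 2 := by
  have hn0 : (0:ℝ) < n := by exact_mod_cast hn
  rw [XX_eq]
  set m := (Finset.univ.filter (fun j => u j ≤ w ^ 2 / (n:ℝ))).card
  set e := th / w with he
  have he0 : 0 ≤ e := by
    rw [he, hth]
    positivity
  have hew : e * w = th := by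
    rw [he]
    field_simp
  have hzq : e + e ^ 2 / 2 ≤ z := by
    have := Real.quadratic_le_exp_of_nonneg he0
    rw [hz]
    linarith
  have hz0 : 0 ≤ z := by nlinarith
  have e1 : (1 + z) ^ m = Real.exp (m * e) := by
    rw [Real.exp_nat_mul, hz]
    ring
  set y := z * (w ^ 2 / n) with hy
  have hy0 : 0 ≤ y := by positivity
  have e2 : (1 + y) ^ n = Real.exp (n * Real.log (1 + y)) := by
    rw [Real.exp_nat_mul, Real.exp_log (by linarith)]
  rw [e1, e2, ← Real.exp_sub]
  have hlog := log_one_add_ge hy0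
  have h1 : (n:ℝ) * (y - y ^ 2 / 2) ≤ n * Real.log (1 + y) :=
    mul_le_mul_of_nonneg_left hlog hn0.le
  have h2 : (n:ℝ) * (y - y ^ 2 / 2) = w ^ 2 * z - (w ^ 4 * z ^ 2) / n / 2 := by
    rw [hy]
    field_simp
  have h3 : (w ^ 4 * z ^ 2) / n ≤ 1 := by
    rw [div_le_one hn0]
    exact hn2
  have h4 : w ^ 2 * (e + e ^ 2 / 2) ≤ w ^ 2 * z := mul_le_mul_of_nonneg_left hzq (by positivity)
  have h5 : w ^ 2 * (e + e ^ 2 / 2) = w * (e * w) + (e * w) ^ 2 / 2 := by ring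
  have h6 : (m:ℝ) * e ≤ (w ^ 2 + c * w) * e := mul_le_mul_of_nonneg_right hcnt he0
  have h7 : (w ^ 2 + c * w) * e = w * (e * w) + c * (e * w) := by ring
  rw [hew] at h5 h7
  have h8 : c * th - th ^ 2 / 2 ≤ -2 := by
    rw [hth]
    nlinarith
  have h9 : (m:ℝ) * e - n * Real.log (1 + y) ≤ -1 := by linarith
  refine (Real.exp_le_exp.2 h9).trans ?_
  rw [Real.exp_neg, inv_eq_one_div]
  apply one_div_le_one_div_of_le (by norm_num)
  have := Real.add_one_le_exp (1:ℝ)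
  linarith

lemma MnPlus_small (d : ℝ) (hd : 0 < d) (q : ℝ) (hq : 0 < q) :
    ∀ᶠ n : ℕ in atTop, nullMeasure n
      {u | (∀ j, u j ∈ Set.Icc (0:ℝ) 1) ∧ d < MnPlus u} ≤ ENNReal.ofReal q := by
  obtain ⟨c, hc0, hcd⟩ : ∃ c : ℝ, 0 ≤ c ∧ Real.exp (-(c ^ 2 / 4)) ≤ d := by
    refine ⟨4 + |Real.log d|, by positivity, ?_⟩
    rw [← Real.le_log_iff_exp_le hd]
    have h1 := neg_abs_le (Real.log d)
    have h2 := abs_nonneg (Real.log d)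
    nlinarith
  obtain ⟨th, hth⟩ : ∃ th : ℝ, th = 2 * c + 2 := ⟨_, rfl⟩
  have hth2 : 2 ≤ th := by linarith
  obtain ⟨e1, he10, he11, he1q⟩ : ∃ e1 : ℝ, 0 < e1 ∧ e1 ≤ 1 ∧ e1 ≤ q / 16 :=
    ⟨min 1 (q / 16), by positivity, min_le_left _ _, min_le_right _ _⟩
  obtain ⟨R, hR⟩ : ∃ R : ℝ, R = 4 * th ^ 2 / e1 := ⟨_, rfl⟩
  have hR1 : 1 ≤ R := by
    rw [hR, le_div_iff₀ he10]
    nlinarith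
  have hRpos : 0 < R := by linarith
  obtain ⟨J, hJ⟩ := exists_nat_ge (8 * Real.exp (4 * th ^ 2) / q + 1)
  have hJ1 : (1:ℝ) ≤ J := le_trans (by have : 0 ≤ 8 * Real.exp (4 * th ^ 2) / q := by positivity
                                       linarith) hJ
  have hJ0 : 0 < J := by
    have : (0:ℝ) < J := by linarith
    exact_mod_cast this
  set w : ℕ → ℝ := fun j => th * R ^ j with hw
  set z : ℕ → ℝ := fun j => Real.exp (th / w j) - 1 with hz
  have hwpos : ∀ j, 0 < w j := fun j => by
    simp only [hw]
    positivity
  have hRj : ∀ j : ℕ, 1 ≤ R ^ j := fun j => one_le_pow₀ hR1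
  have hwth : ∀ j, th ≤ w j := fun j => by
    simp only [hw]
    nlinarith [hRj j]
  have hee : ∀ j, th / w j = 1 / R ^ j := fun j => by
    simp only [hw]
    have : R ^ j ≠ 0 := by positivity
    field_simp
  have hz0 : ∀ j, 0 ≤ z j := fun j => by
    simp only [hz]
    have : 1 ≤ Real.exp (th / w j) := Real.one_le_exp (div_nonneg (by linarith) (hwpos j).le)
    linarith
  have hz2 : ∀ j, z j ≤ 2 * (1 / R ^ j) := fun j => by
    simp only [hz]
    have h1 : 1 / R ^ j ≤ 1 := by
      rw [div_le_one (by positivity)]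
      exact hRj j
    have h0 : 0 ≤ 1 / R ^ j := by positivity
    have := exp_le_quad h0 h1
    rw [hee]
    nlinarith
  have hwmono : ∀ j l, j ≤ l → w j ≤ w l := fun j l h => by
    simp only [hw]
    apply mul_le_mul_of_nonneg_left _ (by linarith)
    exact pow_le_pow_right₀ hR1 h
  obtain ⟨n0, hn0⟩ := exists_nat_ge (4 * w J ^ 4 + w J ^ 2)
  filter_upwards [eventually_ge_atTop n0] with n hn
  have hnr : 4 * w J ^ 4 + w J ^ 2 ≤ n := hn0.trans (by exact_mod_cast hn)
  have hwJ := hwpos J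
  have hnpos : (0:ℝ) < n := lt_of_lt_of_le (by positivity) hnr
  have hnpos' : 0 < n := by exact_mod_cast hnpos
  have hx1 : ∀ j < J, w j ^ 2 / n ≤ 1 := by
    intro j hj
    rw [div_le_one hnpos]
    have : w j ^ 2 ≤ w J ^ 2 := pow_le_pow_left₀ (hwpos j).le (hwmono j J hj.le) 2
    have : 0 ≤ w J ^ 4 := by positivity
    linarith
  have key := second_moment (n := n) hJ0 z (fun j => w j ^ 2 / n) (fun j _ => hz0 j)
    (fun j _ => by positivity) hx1 (fun j _ l _ h => by
      have : w j ^ 2 ≤ w l ^ 2 := pow_le_pow_left₀ (hwpos j).le (hwmono j l h) 2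
      gcongr) (4 * th ^ 2) e1 he10.le (by
      intro j _
      have h1 : (n:ℝ) * (z j * z j * (w j ^ 2 / n)) = (z j * w j) ^ 2 := by
        field_simp
      rw [h1]
      have h2 : z j * w j ≤ 2 * th := by
        calc z j * w j ≤ 2 * (1 / R ^ j) * w j :=
              mul_le_mul_of_nonneg_right (hz2 j) (hwpos j).le
          _ = 2 * th := by
              simp only [hw]
              have : R ^ j ≠ 0 := by positivity
              field_simp
      have h3 : 0 ≤ z j * w j := mul_nonneg (hz0 j) (hwpos j).le
      nlinarith) (by
      intro j _ l _ hjl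
      have h1 : (n:ℝ) * (z j * z l * (w j ^ 2 / n)) = z j * z l * w j ^ 2 := by
        field_simp
      rw [h1]
      have h2 : z j * z l * w j ^ 2 ≤ (2 * (1 / R ^ j)) * (2 * (1 / R ^ l)) * w j ^ 2 := by
        have := hz2 j
        have := hz2 l
        have := hz0 l
        have := hz0 j
        gcongr
      refine h2.trans ?_
      obtain ⟨s, rfl⟩ : ∃ s, l = j + 1 + s := ⟨l - (j + 1), by omega⟩
      have h3 : (2 * (1 / R ^ j)) * (2 * (1 / R ^ (j + 1 + s))) * w j ^ 2 =
          (4 * th ^ 2 / R) / R ^ s := by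
        simp only [hw]
        have : R ^ j ≠ 0 := by positivity
        rw [pow_add, pow_add]
        field_simp
        ring
      have h4 : 4 * th ^ 2 / R = e1 := by
        rw [hR]
        field_simp
      rw [h3, h4, div_le_iff₀ (by positivity)]
      nlinarith [hRj s])
  refine (measure_mono ?_).trans (key.trans (ENNReal.ofReal_le_ofReal ?_))
  · rintro u ⟨hu, hM⟩ j hj
    apply XX_small hnpos' (hwpos j) hth hc0 rfl _ u
    · by_contra hcon
      push Not at hcon
      set m := (Finset.univ.filter (fun i => u i ≤ w j ^ 2 / (n:ℝ))).card with hm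
      have hm0 : 0 < m := by
        have : (0:ℝ) < m := lt_of_le_of_lt (by have := hwpos j
                                               positivity) hcon
        exact_mod_cast this
      have hmn : m ≤ n := by
        have := Finset.card_le_univ (Finset.univ.filter (fun i => u i ≤ w j ^ 2 / (n:ℝ)))
        simpa using this
      have hik : n = (m - 1) + (n - m) + 1 := by omega
      have hU : orderStat u ⟨m - 1, by omega⟩ ≤ w j ^ 2 / n := by
        rw [orderStat_le_iff]
        simp only
        omega
      have hp := pOrd_eq u hu ⟨m - 1, by omega⟩ (k := n - m) hik
      have h1 : bF (m - 1) (n - m) (orderStat u ⟨m - 1, by omega⟩) ≤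
          bF (m - 1) (n - m) (w j ^ 2 / n) :=
        (bF_strictMono _ _).monotoneOn (hu _) ⟨by positivity, hx1 j hj⟩ hU
      have h2 := bF_small hik (hwpos j) hc0 (by have := hwth j
                                                linarith) (by
          rw [Nat.cast_sub (by omega)]
          push_cast
          linarith) (hx1 j hj)
      have h3 := MnPlus_le u ⟨m - 1, by omega⟩
      rw [hp] at h3
      simp only at h3
      linarith
    · have hz2' : z j ≤ 2 := by
        refine (hz2 j).trans ?_
        have h1 : 1 / R ^ j ≤ 1 := by
          rw [div_le_one (by positivity)]
          exact hRj j
        linarith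
      have h4 : w j ^ 4 ≤ w J ^ 4 := pow_le_pow_left₀ (hwpos j).le (hwmono j J hj.le) 4
      have h5 : z j ^ 2 ≤ 4 := by
        have := pow_le_pow_left₀ (hz0 j) hz2' 2
        linarith
      have h6 : w j ^ 4 * z j ^ 2 ≤ w J ^ 4 * 4 := by
        have := hwpos j
        gcongr
      have : 0 ≤ w J ^ 2 := by positivity
      linarith
  · have h1 : Real.exp (4 * th ^ 2) / J ≤ q / 8 := by
      rw [div_le_iff₀ (by linarith)]
      have : 8 * Real.exp (4 * th ^ 2) / q ≤ J := by linarith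
      rw [div_le_iff₀ hq] at this
      linarith
    have h2 := exp_le_quad he10.le he11
    nlinarith

/-! ### Deterministic estimates for the beta distribution -/

lemma log_one_sub_approx {y : ℝ} (h : |y| ≤ 1 / 2) :
    |y + y ^ 2 / 2 + Real.log (1 - y)| ≤ 2 * |y| ^ 3 := by
  have h1 := Real.abs_log_sub_add_sum_range_le (x := y) (by linarith) 2
  simp only [Finset.sum_range_succ, Finset.sum_range_zero] at h1
  norm_num at h1
  refine h1.trans ?_
  rw [div_le_iff₀ (by linarith)]
  have : 0 ≤ |y| ^ 3 := by positivity
  nlinarith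

lemma log_one_sub_upper {y : ℝ} (h : |y| ≤ 1 / 8) : Real.log (1 - y) ≤ -y - y ^ 2 / 4 := by
  have h1 := (abs_le.1 (log_one_sub_approx (y := y) (by linarith))).2
  have h2 : |y| ^ 3 ≤ y ^ 2 / 8 := by
    have : |y| ^ 3 = |y| * y ^ 2 := by
      rw [← sq_abs y]
      ring
    rw [this]
    nlinarith [sq_nonneg y]
  linarith

lemma log_one_sub_lower {y : ℝ} (h0 : 0 ≤ y) (h : y ≤ 1 / 2) :
    -y - y ^ 2 / 2 - 2 * y ^ 3 ≤ Real.log (1 - y) := by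
  have h1 := (abs_le.1 (log_one_sub_approx (y := y) (by rw [abs_of_nonneg h0]; exact h))).1
  rw [abs_of_nonneg h0] at h1
  linarith

/-- `g = σ N`. -/
lemma betaSD_eq {a b : ℝ} (ha : 0 < a) (hb : 0 < b) :
    ∃ g : ℝ, 0 < g ∧ g ^ 2 * (a + b + 1) = a * b ∧ betaSD a b = g / (a + b) := by
  refine ⟨Real.sqrt (a * b / (a + b + 1)), by positivity, ?_, ?_⟩
  · rw [Real.sq_sqrt (by positivity)]
    field_simp
  · unfold betaSD
    rw [show a * b / ((a + b) ^ 2 * (a + b + 1)) = (a * b / (a + b + 1)) / (a + b) ^ 2 by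
      field_simp]
    rw [Real.sqrt_div (by positivity), Real.sqrt_sq (by positivity)]

lemma g_div_le {a b g : ℝ} (ha : 0 < a) (hb : 0 < b) (hg : 0 < g)
    (hg2 : g ^ 2 * (a + b + 1) = a * b) : g / a ≤ 1 / Real.sqrt a ∧ g / b ≤ 1 / Real.sqrt b := by
  have h1 : g ^ 2 ≤ a := by
    by_contra hcon
    push Not at hcon
    nlinarith
  have h2 : g ^ 2 ≤ b := by
    by_contra hcon
    push Not at hcon
    nlinarith
  have aux : ∀ c : ℝ, 0 < c → g ^ 2 ≤ c → g / c ≤ 1 / Real.sqrt c := by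
    intro c hc h
    have hs : 0 < Real.sqrt c := Real.sqrt_pos.2 hc
    have : g ≤ Real.sqrt c := Real.le_sqrt_of_sq_le h
    rw [div_le_div_iff₀ hc hs]
    have e := Real.mul_self_sqrt hc.le
    nlinarith
  exact ⟨aux a ha h1, aux b hb h2⟩

lemma quad_sum {a b g : ℝ} (ha : 0 < a) (hb : 0 < b)
    (hg2 : g ^ 2 * (a + b + 1) = a * b) (s : ℝ) :
    a * (s * (g / a)) ^ 2 + b * (s * (g / b)) ^ 2 = s ^ 2 * ((a + b) / (a + b + 1)) := by
  have hh : g ^ 2 = a * b / (a + b + 1) := by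
    rw [eq_div_iff (by positivity)]
    exact hg2
  have : a * (s * (g / a)) ^ 2 + b * (s * (g / b)) ^ 2 = s ^ 2 * g ^ 2 * (1 / a + 1 / b) := by
    field_simp
  rw [this, hh]
  field_simp
  ring

/-- Lower bound on the exponent. -/
lemma expo_lower {i k : ℕ} {g s : ℝ} (hg : 0 < g)
    (hg2 : g ^ 2 * ((i:ℝ) + 1 + (k + 1) + 1) = ((i:ℝ) + 1) * (k + 1)) (hs : 0 ≤ s)
    (hs2 : s * (g / ((i:ℝ) + 1)) ≤ 1 / 2) :
    Real.exp (-(s ^ 2 / 2) - 2 * (s ^ 3 / Real.sqrt ((i:ℝ) + 1))) ≤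
      (1 - s * (g / ((i:ℝ) + 1))) ^ (i + 1) * (1 + s * (g / ((k:ℝ) + 1))) ^ (k + 1) := by
  set a : ℝ := (i:ℝ) + 1 with ha'
  set b : ℝ := (k:ℝ) + 1 with hb'
  have ha : 0 < a := by positivity
  have hb : 0 < b := by positivity
  have hy0 : 0 ≤ s * (g / a) := by positivity
  have hy'0 : 0 ≤ s * (g / b) := by positivity
  have e1 : (1 - s * (g / a)) ^ (i + 1) = Real.exp (a * Real.log (1 - s * (g / a))) := by
    have : a = ((i + 1 : ℕ) : ℝ) := by
      push_cast
      rfl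
    rw [this, Real.exp_nat_mul, Real.exp_log]
    rw [← this]
    linarith
  have e2 : (1 + s * (g / b)) ^ (k + 1) = Real.exp (b * Real.log (1 + s * (g / b))) := by
    have : b = ((k + 1 : ℕ) : ℝ) := by
      push_cast
      rfl
    rw [this, Real.exp_nat_mul, Real.exp_log]
    rw [← this]
    linarith
  rw [e1, e2, ← Real.exp_add]
  apply Real.exp_le_exp.2
  have l1 := mul_le_mul_of_nonneg_left (log_one_sub_lower hy0 hs2) ha.le
  have l2 := mul_le_mul_of_nonneg_left (log_one_add_ge hy'0) hb.le
  have q := quad_sum ha hb hg2 s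
  have q2 : s ^ 2 * ((a + b) / (a + b + 1)) ≤ s ^ 2 := by
    apply mul_le_of_le_one_right (by positivity)
    rw [div_le_one (by positivity)]
    linarith
  have c1 : a * (s * (g / a)) = b * (s * (g / b)) := by
    field_simp
  have c3 : a * (s * (g / a)) ^ 3 ≤ s ^ 3 / Real.sqrt a := by
    have hga := (g_div_le ha hb hg hg2).1
    have hsa : 0 < Real.sqrt a := Real.sqrt_pos.2 ha
    have h3 : (g / a) ^ 3 ≤ (1 / Real.sqrt a) ^ 3 := pow_le_pow_left₀ (by positivity) hga 3
    have h4 : a * (1 / Real.sqrt a) ^ 3 = 1 / Real.sqrt a := by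
      have := Real.sq_sqrt ha.le
      field_simp
      linarith
    calc a * (s * (g / a)) ^ 3 = s ^ 3 * (a * (g / a) ^ 3) := by ring
      _ ≤ s ^ 3 * (a * (1 / Real.sqrt a) ^ 3) := by gcongr
      _ = s ^ 3 / Real.sqrt a := by
          rw [h4]
          ring
  linarith

/-- Chernoff bound in the moderate deviation zone. -/
lemma bF_tail {i k : ℕ} {s : ℝ} (hs : 0 ≤ s)
    (hsa : s / Real.sqrt ((i:ℝ) + 1) ≤ 1 / 8) (hsb : s / Real.sqrt ((k:ℝ) + 1) ≤ 1 / 8) :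
    0 ≤ betaMean ((i:ℝ) + 1) ((k:ℝ) + 1) - s * betaSD ((i:ℝ) + 1) ((k:ℝ) + 1) ∧
    betaMean ((i:ℝ) + 1) ((k:ℝ) + 1) - s * betaSD ((i:ℝ) + 1) ((k:ℝ) + 1) ≤ 1 ∧
    bF i k (betaMean ((i:ℝ) + 1) ((k:ℝ) + 1) - s * betaSD ((i:ℝ) + 1) ((k:ℝ) + 1)) ≤
      Real.exp (-(s ^ 2 / 8)) := by
  set a : ℝ := (i:ℝ) + 1 with ha'
  set b : ℝ := (k:ℝ) + 1 with hb'
  have ha : 0 < a := by positivity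
  have hb : 0 < b := by positivity
  obtain ⟨g, hg, hg2, hsd⟩ := betaSD_eq ha hb
  obtain ⟨hga, hgb⟩ := g_div_le ha hb hg hg2
  have hy0 : 0 ≤ s * (g / a) := by positivity
  have hy'0 : 0 ≤ s * (g / b) := by positivity
  have hy : s * (g / a) ≤ 1 / 8 :=
    (mul_le_mul_of_nonneg_left hga hs).trans (by rw [mul_one_div]; exact hsa)
  have hy' : s * (g / b) ≤ 1 / 8 :=
    (mul_le_mul_of_nonneg_left hgb hs).trans (by rw [mul_one_div]; exact hsb)
  have ht : betaMean a b - s * betaSD a b = a / (a + b) * (1 - s * (g / a)) := by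
    rw [hsd, betaMean]
    field_simp
  have ht1 : 1 - (betaMean a b - s * betaSD a b) = b / (a + b) * (1 + s * (g / b)) := by
    rw [hsd, betaMean]
    field_simp
    ring
  set t := betaMean a b - s * betaSD a b
  have hm1 : 0 < 1 - s * (g / a) := by linarith
  have ht0 : 0 < t := by
    rw [ht]
    positivity
  have ht1' : t ≤ 1 := by
    have : 0 ≤ 1 - t := by
      rw [ht1]
      positivity
    linarith
  refine ⟨ht0.le, ht1', ?_⟩
  have hz1 : 1 ≤ (1 + s * (g / b)) / (1 - s * (g / a)) := by
    rw [le_div_iff₀ hm1]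
    linarith
  have h := bF_chernoff i k ht0.le ht1' hz1
  have e : 1 - t + t * ((1 + s * (g / b)) / (1 - s * (g / a))) = 1 + s * (g / b) := by
    rw [ht1, ht]
    have aux : ∀ Y Z : ℝ, Z ≠ 0 →
        b / (a + b) * Y + a / (a + b) * Z * (Y / Z) = Y := by
      intro Y Z hZ
      field_simp
      ring
    exact aux _ _ hm1.ne'
  rw [e, div_pow] at h
  have h2 : bF i k t ≤ (1 - s * (g / a)) ^ (i + 1) * (1 + s * (g / b)) ^ (k + 1) := by
    have hp : 0 < (1 + s * (g / b)) ^ (i + 1) := by positivity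
    have hq : 0 < (1 - s * (g / a)) ^ (i + 1) := by positivity
    have h3 : (1 + s * (g / b)) ^ (i + 1) * bF i k t ≤
        (1 + s * (g / b)) ^ (i + 1) * ((1 - s * (g / a)) ^ (i + 1) * (1 + s * (g / b)) ^ k) := by
      have := mul_le_mul_of_nonneg_left h hq.le
      calc _ = (1 - s * (g / a)) ^ (i + 1) *
            ((1 + s * (g / b)) ^ (i + 1) / (1 - s * (g / a)) ^ (i + 1) * bF i k t) := by
              have aux : ∀ P Q F : ℝ, Q ≠ 0 → P * F = Q * (P / Q * F) := by
                intro P Q F hQ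
                field_simp
              exact aux _ _ _ hq.ne'
        _ ≤ _ := this
        _ = _ := by ring
    have h4 := le_of_mul_le_mul_left h3 hp
    refine h4.trans ?_
    apply mul_le_mul_of_nonneg_left _ hq.le
    apply pow_le_pow_right₀ (by linarith) (by omega)
  refine h2.trans ?_
  have e1 : (1 - s * (g / a)) ^ (i + 1) = Real.exp (a * Real.log (1 - s * (g / a))) := by
    have : a = ((i + 1 : ℕ) : ℝ) := by
      push_cast
      rfl
    rw [this, Real.exp_nat_mul, Real.exp_log]
    rw [← this]
    linarith
  have e2 : (1 + s * (g / b)) ^ (k + 1) = Real.exp (b * Real.log (1 + s * (g / b))) := by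
    have : b = ((k + 1 : ℕ) : ℝ) := by
      push_cast
      rfl
    rw [this, Real.exp_nat_mul, Real.exp_log]
    rw [← this]
    linarith
  rw [e1, e2, ← Real.exp_add]
  apply Real.exp_le_exp.2
  have l1 := mul_le_mul_of_nonneg_left
    (log_one_sub_upper (y := s * (g / a)) (by rw [abs_of_nonneg hy0]; exact hy)) ha.le
  have l2 := mul_le_mul_of_nonneg_left
    (log_one_sub_upper (y := -(s * (g / b))) (by rw [abs_neg, abs_of_nonneg hy'0]; exact hy')) hb.le
  rw [sub_neg_eq_add] at l2
  have q := quad_sum ha hb hg2 s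
  have q2 : s ^ 2 * (1 / 2) ≤ s ^ 2 * ((a + b) / (a + b + 1)) := by
    apply mul_le_mul_of_nonneg_left _ (by positivity)
    rw [div_le_div_iff₀ (by norm_num) (by positivity)]
    have : 1 ≤ a := by
      rw [ha']
      have : (0:ℝ) ≤ i := by positivity
      linarith
    linarith
  have c1 : a * (s * (g / a)) = b * (s * (g / b)) := by
    field_simp
  nlinarith

lemma factorial_stirling (n : ℕ) : ((n + 1).factorial : ℝ) =
    Stirling.stirlingSeq (n + 1) * (Real.sqrt 2 * Real.sqrt ((n:ℝ) + 1)) *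
      (((n:ℝ) + 1) ^ (n + 1) * (Real.exp 1 ^ (n + 1))⁻¹) := by
  unfold Stirling.stirlingSeq
  push_cast
  rw [Real.sqrt_mul (by norm_num), div_pow]
  field_simp

/-- Value of the normalised density at the mean through Stirling's sequence. -/
lemma central_value {i k : ℕ} {g : ℝ} (hg : 0 < g)
    (hg2 : g ^ 2 * ((i:ℝ) + 1 + (k + 1) + 1) = ((i:ℝ) + 1) * (k + 1)) :
    g / ((i:ℝ) + 1 + (k + 1)) * (((i + k + 1).factorial : ℝ) / (i.factorial * k.factorial)) *
      ((((i:ℝ) + 1) / ((i:ℝ) + 1 + (k + 1))) ^ i * (((k:ℝ) + 1) / ((i:ℝ) + 1 + (k + 1))) ^ k) =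
    Real.sqrt (((i:ℝ) + 1 + (k + 1)) / ((i:ℝ) + 1 + (k + 1) + 1)) / Real.sqrt 2 *
      (Stirling.stirlingSeq (i + k + 1 + 1) /
        (Stirling.stirlingSeq (i + 1) * Stirling.stirlingSeq (k + 1))) := by
  have f1 := factorial_stirling i
  have f2 := factorial_stirling k
  have f3 := factorial_stirling (i + k + 1)
  have hi : ((i + 1).factorial : ℝ) = ((i:ℝ) + 1) * i.factorial := by
    rw [Nat.factorial_succ]
    push_cast
    rfl
  have hk : ((k + 1).factorial : ℝ) = ((k:ℝ) + 1) * k.factorial := by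
    rw [Nat.factorial_succ]
    push_cast
    rfl
  have hn : ((i + k + 1 + 1).factorial : ℝ) = ((i:ℝ) + 1 + (k + 1)) * (i + k + 1).factorial := by
    rw [Nat.factorial_succ (i + k + 1)]
    push_cast
    ring
  rw [hi] at f1
  rw [hk] at f2
  rw [hn] at f3
  have hcast : (((i + k + 1 : ℕ) : ℝ)) + 1 = (i:ℝ) + 1 + (k + 1) := by
    push_cast
    ring
  rw [hcast] at f3
  have s1 : 0 < Stirling.stirlingSeq (i + 1) := Stirling.stirlingSeq'_pos i
  have s2 : 0 < Stirling.stirlingSeq (k + 1) := Stirling.stirlingSeq'_pos k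
  generalize Stirling.stirlingSeq (i + 1) = S1 at *
  generalize Stirling.stirlingSeq (k + 1) = S2 at *
  generalize Stirling.stirlingSeq (i + k + 1 + 1) = S3 at *
  have ha : (0:ℝ) < (i:ℝ) + 1 := by positivity
  have hb : (0:ℝ) < (k:ℝ) + 1 := by positivity
  generalize (i:ℝ) + 1 = a at *
  generalize (k:ℝ) + 1 = b at *
  have hN : 0 < a + b := by positivity
  have r1 : (i.factorial : ℝ) = S1 * (Real.sqrt 2 * Real.sqrt a) *
      (a ^ i * (Real.exp 1 ^ (i + 1))⁻¹) := by
    rw [pow_succ a] at f1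
    apply mul_left_cancel₀ ha.ne'
    rw [f1]
    ring
  have r2 : (k.factorial : ℝ) = S2 * (Real.sqrt 2 * Real.sqrt b) *
      (b ^ k * (Real.exp 1 ^ (k + 1))⁻¹) := by
    rw [pow_succ b] at f2
    apply mul_left_cancel₀ hb.ne'
    rw [f2]
    ring
  have r3 : ((i + k + 1).factorial : ℝ) = S3 * (Real.sqrt 2 * Real.sqrt (a + b)) *
      ((a + b) * ((a + b) ^ i * (a + b) ^ k) *
        (Real.exp 1 ^ (i + 1) * Real.exp 1 ^ (k + 1))⁻¹) := by
    apply mul_left_cancel₀ hN.ne'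
    rw [f3, ← pow_add (Real.exp 1), show i + 1 + (k + 1) = i + k + 1 + 1 by ring]
    ring
  have hgs : g = Real.sqrt a * Real.sqrt b / Real.sqrt (a + b + 1) := by
    rw [← Real.sqrt_mul ha.le, ← Real.sqrt_div (by positivity), eq_comm]
    rw [Real.sqrt_eq_iff_mul_self_eq (by positivity) hg.le, ← hg2]
    field_simp
  rw [r1, r2, r3, Real.sqrt_div hN.le, hgs, div_pow, div_pow]
  have p1 : 0 < Real.sqrt a := Real.sqrt_pos.2 ha
  have p2 : 0 < Real.sqrt b := Real.sqrt_pos.2 hb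
  have p3 : 0 < Real.sqrt (a + b) := Real.sqrt_pos.2 hN
  have p4 : 0 < Real.sqrt (a + b + 1) := Real.sqrt_pos.2 (by positivity)
  have p5 : 0 < Real.sqrt 2 := Real.sqrt_pos.2 (by norm_num)
  have p6 : 0 < Real.exp 1 := Real.exp_pos 1
  field_simp

/-- Lower bound for the density. -/
lemma bf_lower {i k : ℕ} {s : ℝ} (hs : 0 ≤ s)
    (hsa : s / Real.sqrt ((i:ℝ) + 1) ≤ 1 / 2) :
    Real.sqrt (((i:ℝ) + 1 + (k + 1)) / ((i:ℝ) + 1 + (k + 1) + 1)) / Real.sqrt 2 *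
      (Stirling.stirlingSeq (i + k + 1 + 1) /
        (Stirling.stirlingSeq (i + 1) * Stirling.stirlingSeq (k + 1))) *
      (Real.exp (-(s ^ 2 / 2) - 2 * (s ^ 3 / Real.sqrt ((i:ℝ) + 1))) /
        (1 + s / Real.sqrt ((k:ℝ) + 1))) ≤
    betaSD ((i:ℝ) + 1) ((k:ℝ) + 1) *
      bf i k (betaMean ((i:ℝ) + 1) ((k:ℝ) + 1) - s * betaSD ((i:ℝ) + 1) ((k:ℝ) + 1)) := by
  have ha : (0:ℝ) < (i:ℝ) + 1 := by positivity
  have hb : (0:ℝ) < (k:ℝ) + 1 := by positivity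
  obtain ⟨g, hg, hg2, hsd⟩ := betaSD_eq ha hb
  obtain ⟨hga, hgb⟩ := g_div_le ha hb hg hg2
  have hcv := central_value hg hg2
  have hy : s * (g / ((i:ℝ) + 1)) ≤ 1 / 2 :=
    (mul_le_mul_of_nonneg_left hga hs).trans (by rw [mul_one_div]; exact hsa)
  have hE := expo_lower hg hg2 hs hy
  have hy' : s * (g / ((k:ℝ) + 1)) ≤ s / Real.sqrt ((k:ℝ) + 1) :=
    (mul_le_mul_of_nonneg_left hgb hs).trans (by rw [mul_one_div])
  have hC0 : 0 ≤ Real.sqrt (((i:ℝ) + 1 + (k + 1)) / ((i:ℝ) + 1 + (k + 1) + 1)) / Real.sqrt 2 *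
      (Stirling.stirlingSeq (i + k + 1 + 1) /
        (Stirling.stirlingSeq (i + 1) * Stirling.stirlingSeq (k + 1))) := by
    have := Stirling.stirlingSeq'_pos i
    have := Stirling.stirlingSeq'_pos k
    have := Stirling.stirlingSeq'_pos (i + k + 1)
    positivity
  set E := Real.exp (-(s ^ 2 / 2) - 2 * (s ^ 3 / Real.sqrt ((i:ℝ) + 1)))
  set C := Real.sqrt (((i:ℝ) + 1 + (k + 1)) / ((i:ℝ) + 1 + (k + 1) + 1)) / Real.sqrt 2 *
      (Stirling.stirlingSeq (i + k + 1 + 1) /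
        (Stirling.stirlingSeq (i + 1) * Stirling.stirlingSeq (k + 1)))
  have hE0 : 0 ≤ E := (Real.exp_pos _).le
  have ht : betaMean ((i:ℝ) + 1) ((k:ℝ) + 1) - s * betaSD ((i:ℝ) + 1) ((k:ℝ) + 1) =
      ((i:ℝ) + 1) / ((i:ℝ) + 1 + (k + 1)) * (1 - s * (g / ((i:ℝ) + 1))) := by
    rw [hsd, betaMean]
    field_simp
  have ht1 : 1 - (betaMean ((i:ℝ) + 1) ((k:ℝ) + 1) - s * betaSD ((i:ℝ) + 1) ((k:ℝ) + 1)) =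
      ((k:ℝ) + 1) / ((i:ℝ) + 1 + (k + 1)) * (1 + s * (g / ((k:ℝ) + 1))) := by
    rw [hsd, betaMean]
    field_simp
    ring
  have hy0 : 0 ≤ s * (g / ((i:ℝ) + 1)) := by positivity
  have hy'0 : 0 ≤ s * (g / ((k:ℝ) + 1)) := by positivity
  unfold bf
  rw [ht1, ht, hsd]
  set y := s * (g / ((i:ℝ) + 1))
  set y' := s * (g / ((k:ℝ) + 1))
  have hm1 : 0 < 1 - y := by linarith
  have hrw : g / ((i:ℝ) + 1 + (k + 1)) * (((i + k + 1).factorial : ℝ) / (i.factorial * k.factorial) *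
      ((((i:ℝ) + 1) / ((i:ℝ) + 1 + (k + 1)) * (1 - y)) ^ i *
        (((k:ℝ) + 1) / ((i:ℝ) + 1 + (k + 1)) * (1 + y')) ^ k)) =
      C * ((1 - y) ^ i * (1 + y') ^ k) := by
    rw [← hcv, mul_pow, mul_pow]
    ring
  rw [hrw]
  apply mul_le_mul_of_nonneg_left _ hC0
  rw [div_le_iff₀ (by positivity)]
  calc E ≤ (1 - y) ^ (i + 1) * (1 + y') ^ (k + 1) := hE
    _ = ((1 - y) ^ i * (1 + y') ^ k) * ((1 - y) * (1 + y')) := by ring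
    _ ≤ ((1 - y) ^ i * (1 + y') ^ k) * (1 + s / Real.sqrt ((k:ℝ) + 1)) := by
        apply mul_le_mul_of_nonneg_left _ (by positivity)
        nlinarith

/-! ### The lower bound for the tail of the beta distribution -/

lemma bf_density {i k : ℕ} {ε L τ S s : ℝ} (hε : 0 < ε) (hε1 : ε < 1) (hL : 1 ≤ L)
    (hτ : 1 ≤ τ) (hτL : L ^ 2 / (2 * τ ^ 2) ≤ ε / 8) (hS : τ + L ≤ S)
    (hSa : S ^ 3 / Real.sqrt ((i:ℝ) + 1) ≤ ε / 16) (hSb : S ^ 3 / Real.sqrt ((k:ℝ) + 1) ≤ ε / 16)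
    (hi : Stirling.stirlingSeq (i + 1) ≤ Real.sqrt Real.pi / (1 - ε / 8))
    (hk : Stirling.stirlingSeq (k + 1) ≤ Real.sqrt Real.pi / (1 - ε / 8))
    (hN : 1 - ε / 8 ≤ ((i:ℝ) + 1 + (k + 1)) / ((i:ℝ) + 1 + (k + 1) + 1))
    (hs : τ ≤ s) (hs2 : s ≤ τ + L / τ) :
    (1 - ε / 8) ^ 6 / Real.sqrt (2 * Real.pi) *
      (Real.exp (-(τ ^ 2 / 2)) * Real.exp (-(τ * (s - τ)))) ≤
    betaSD ((i:ℝ) + 1) ((k:ℝ) + 1) *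
      bf i k (betaMean ((i:ℝ) + 1) ((k:ℝ) + 1) - s * betaSD ((i:ℝ) + 1) ((k:ℝ) + 1)) := by
  have hs0 : 1 ≤ s := hτ.trans hs
  have hLτ : L / τ ≤ L := div_le_self (by linarith) hτ
  have hsS : s ≤ S := by linarith
  have hs3 : s ^ 3 ≤ S ^ 3 := pow_le_pow_left₀ (by linarith) hsS 3
  have hss3 : s ≤ s ^ 3 := by nlinarith [mul_nonneg (sub_nonneg.2 hs0) (sub_nonneg.2 hs0)]
  have hqa : 0 < Real.sqrt ((i:ℝ) + 1) := Real.sqrt_pos.2 (by positivity)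
  have hqb : 0 < Real.sqrt ((k:ℝ) + 1) := Real.sqrt_pos.2 (by positivity)
  have hca : s ^ 3 / Real.sqrt ((i:ℝ) + 1) ≤ ε / 16 :=
    (div_le_div_of_nonneg_right hs3 hqa.le).trans hSa
  have hcb : s / Real.sqrt ((k:ℝ) + 1) ≤ ε / 16 :=
    (div_le_div_of_nonneg_right (hss3.trans hs3) hqb.le).trans hSb
  have hca' : s / Real.sqrt ((i:ℝ) + 1) ≤ ε / 16 :=
    (div_le_div_of_nonneg_right (hss3.trans hs3) hqa.le).trans hSa
  refine le_trans ?_ (bf_lower (by linarith) (hca'.trans (by linarith)))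
  have hpi : 0 < Real.sqrt Real.pi := Real.sqrt_pos.2 Real.pi_pos
  have h2 : 0 < Real.sqrt 2 := by positivity
  generalize hρ : 1 - ε / 8 = ρ at *
  have hρ0 : 0 < ρ := by linarith
  have hρ1 : ρ ≤ 1 := by linarith
  have A : ρ ≤ Real.sqrt (((i:ℝ) + 1 + (k + 1)) / ((i:ℝ) + 1 + (k + 1) + 1)) := by
    apply Real.le_sqrt_of_sq_le
    nlinarith
  have s1 : 0 < Stirling.stirlingSeq (i + 1) :=
    hpi.trans_le (Stirling.sqrt_pi_le_stirlingSeq (by omega))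
  have s2 : 0 < Stirling.stirlingSeq (k + 1) :=
    hpi.trans_le (Stirling.sqrt_pi_le_stirlingSeq (by omega))
  have B : ρ ^ 2 / Real.sqrt Real.pi ≤ Stirling.stirlingSeq (i + k + 1 + 1) /
        (Stirling.stirlingSeq (i + 1) * Stirling.stirlingSeq (k + 1)) := by
    calc ρ ^ 2 / Real.sqrt Real.pi =
        Real.sqrt Real.pi / ((Real.sqrt Real.pi / ρ) * (Real.sqrt Real.pi / ρ)) := by
          field_simp
      _ ≤ _ := by
        have h3 : Real.sqrt Real.pi ≤ Stirling.stirlingSeq (i + k + 1 + 1) :=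
          Stirling.sqrt_pi_le_stirlingSeq (by omega)
        apply div_le_div₀ (by linarith) h3 (by positivity)
        exact mul_le_mul hi hk s2.le (by positivity)
  have C : Real.exp (-(τ ^ 2 / 2)) * Real.exp (-(τ * (s - τ))) * (ρ * ρ) ≤
      Real.exp (-(s ^ 2 / 2) - 2 * (s ^ 3 / Real.sqrt ((i:ℝ) + 1))) := by
    have hr : ρ ≤ Real.exp (-(ε / 8)) := by
      have := Real.add_one_le_exp (-(ε / 8))
      linarith
    have hq : s ^ 2 / 2 ≤ τ ^ 2 / 2 + τ * (s - τ) + ε / 8 := by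
      have e1 : (s - τ) ^ 2 ≤ (L / τ) ^ 2 := pow_le_pow_left₀ (by linarith) (by linarith) 2
      have e2 : (L / τ) ^ 2 / 2 = L ^ 2 / (2 * τ ^ 2) := by
        field_simp
      nlinarith
    calc _ ≤ Real.exp (-(τ ^ 2 / 2)) * Real.exp (-(τ * (s - τ))) *
          (Real.exp (-(ε / 8)) * Real.exp (-(ε / 8))) := by gcongr
      _ ≤ _ := by
        rw [← Real.exp_add, ← Real.exp_add, ← Real.exp_add]
        apply Real.exp_le_exp.2
        linarith
  have D : ρ ≤ 1 / (1 + s / Real.sqrt ((k:ℝ) + 1)) := by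
    have h0 : 0 ≤ s / Real.sqrt ((k:ℝ) + 1) := by positivity
    rw [le_div_iff₀ (by linarith)]
    nlinarith
  have h0 : 0 < 1 + s / Real.sqrt ((k:ℝ) + 1) := by positivity
  rw [Real.sqrt_mul (by norm_num) Real.pi]
  calc _ = ρ / Real.sqrt 2 * (ρ ^ 2 / Real.sqrt Real.pi) *
        ((Real.exp (-(τ ^ 2 / 2)) * Real.exp (-(τ * (s - τ))) * (ρ * ρ)) * ρ) := by
        field_simp
    _ ≤ Real.sqrt (((i:ℝ) + 1 + (k + 1)) / ((i:ℝ) + 1 + (k + 1) + 1)) / Real.sqrt 2 *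
      (Stirling.stirlingSeq (i + k + 1 + 1) /
        (Stirling.stirlingSeq (i + 1) * Stirling.stirlingSeq (k + 1))) *
      (Real.exp (-(s ^ 2 / 2) - 2 * (s ^ 3 / Real.sqrt ((i:ℝ) + 1))) *
        (1 / (1 + s / Real.sqrt ((k:ℝ) + 1)))) := by
        have hb0 := le_trans (by positivity : 0 ≤ ρ ^ 2 / Real.sqrt Real.pi) B
        gcongr
    _ = _ := by rw [mul_one_div]

lemma bF_core {i k : ℕ} {ε L τ S : ℝ} (hε : 0 < ε) (hε1 : ε < 1) (hL : 1 ≤ L)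
    (hLe : Real.exp (-L) ≤ ε / 8)
    (hτ : 1 ≤ τ) (hτL : L ^ 2 / (2 * τ ^ 2) ≤ ε / 8) (hS : τ + L ≤ S)
    (hSa : S ^ 3 / Real.sqrt ((i:ℝ) + 1) ≤ ε / 16) (hSb : S ^ 3 / Real.sqrt ((k:ℝ) + 1) ≤ ε / 16)
    (hi : Stirling.stirlingSeq (i + 1) ≤ Real.sqrt Real.pi / (1 - ε / 8))
    (hk : Stirling.stirlingSeq (k + 1) ≤ Real.sqrt Real.pi / (1 - ε / 8))
    (hN : 1 - ε / 8 ≤ ((i:ℝ) + 1 + (k + 1)) / ((i:ℝ) + 1 + (k + 1) + 1)) :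
    (1 - ε) / (Real.sqrt (2 * Real.pi) * τ) * Real.exp (-(τ ^ 2 / 2)) <
      bF i k (betaMean ((i:ℝ) + 1) ((k:ℝ) + 1) - τ * betaSD ((i:ℝ) + 1) ((k:ℝ) + 1)) := by
  have dens := fun s (h1 : τ ≤ s) (h2 : s ≤ τ + L / τ) =>
    bf_density (i := i) (k := k) hε hε1 hL hτ hτL hS hSa hSb hi hk hN h1 h2
  have hLτ : L / τ ≤ L := div_le_self (by linarith) hτ
  have hqa : 0 < Real.sqrt ((i:ℝ) + 1) := Real.sqrt_pos.2 (by positivity)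
  have hqb : 0 < Real.sqrt ((k:ℝ) + 1) := Real.sqrt_pos.2 (by positivity)
  have hτ0 : 0 < τ := by linarith
  have hLτ0 : 0 < L / τ := by positivity
  -- range of the left endpoint
  have hss3 : τ + L / τ ≤ S ^ 3 := by
    have h1 : 1 ≤ S := by linarith
    have : S ≤ S ^ 3 := by nlinarith [mul_nonneg (sub_nonneg.2 h1) (sub_nonneg.2 h1)]
    linarith
  have tail := bF_tail (i := i) (k := k) (s := τ + L / τ) (by positivity)
    (((div_le_div_of_nonneg_right hss3 hqa.le).trans hSa).trans (by linarith))
    (((div_le_div_of_nonneg_right hss3 hqb.le).trans hSb).trans (by linarith))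
  have hσ : 0 < betaSD ((i:ℝ) + 1) ((k:ℝ) + 1) := by
    unfold betaSD
    positivity
  generalize betaSD ((i:ℝ) + 1) ((k:ℝ) + 1) = σ at *
  generalize betaMean ((i:ℝ) + 1) ((k:ℝ) + 1) = μ at *
  have hx1 : 0 ≤ bF i k (μ - (τ + L / τ) * σ) := by
    rw [← bF_zero i k]
    exact (bF_strictMono i k).monotoneOn ⟨le_refl _, zero_le_one⟩ ⟨tail.1, tail.2.1⟩ tail.1
  have hpi : 0 < Real.sqrt (2 * Real.pi) := Real.sqrt_pos.2 (by positivity)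
  set c : ℝ := (1 - ε / 8) ^ 6 / Real.sqrt (2 * Real.pi) * Real.exp (-(τ ^ 2 / 2)) with hc
  have hρ0 : 0 < 1 - ε / 8 := by linarith
  have hc0 : 0 < c := by positivity
  -- `bF (μ - s σ) + c/τ e^{-τ(s-τ)}` is antitone in `s`
  have hder : ∀ s, HasDerivAt (fun s => bF i k (μ - s * σ) - c / τ * Real.exp (-(τ * (s - τ))))
      (-(σ * bf i k (μ - s * σ)) + c * Real.exp (-(τ * (s - τ)))) s := by
    intro s
    have d1 : HasDerivAt (fun s : ℝ => μ - s * σ) (-σ) s := by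
      simpa using ((hasDerivAt_id s).mul_const σ).const_sub μ
    have d2 := (bF_hasDerivAt i k (μ - s * σ)).comp s d1
    have d3 : HasDerivAt (fun s : ℝ => -(τ * (s - τ))) (-τ) s := by
      have d0 : HasDerivAt (fun s : ℝ => (-τ) * (s - τ)) (-τ) s := by
        simpa using ((hasDerivAt_id s).sub_const τ).const_mul (-τ)
      simpa only [neg_mul] using d0
    have d4 := (d3.exp).const_mul (c / τ)
    have d5 := d2.sub d4
    refine d5.congr_deriv ?_
    field_simp
    ring
  have anti : AntitoneOn (fun s => bF i k (μ - s * σ) - c / τ * Real.exp (-(τ * (s - τ))))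
      (Icc τ (τ + L / τ)) := by
    apply antitoneOn_of_deriv_nonpos (convex_Icc _ _)
    · exact fun s _ => (hder s).continuousAt.continuousWithinAt
    · exact fun s _ => (hder s).differentiableAt.differentiableWithinAt
    · intro s hs
      rw [interior_Icc] at hs
      rw [(hder s).deriv]
      have := dens s hs.1.le hs.2.le
      rw [← mul_assoc] at this
      linarith
  have fin := anti (left_mem_Icc.2 (by linarith)) (right_mem_Icc.2 (by linarith)) (by linarith)
  simp only [sub_self, mul_zero, neg_zero, Real.exp_zero, mul_one, add_sub_cancel_left] at fin
  rw [mul_div_cancel₀ _ hτ0.ne'] at fin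
  have h7 : c / τ * (1 - ε / 8) ≤ bF i k (μ - τ * σ) := by
    have : c / τ * Real.exp (-L) ≤ c / τ * (ε / 8) :=
      mul_le_mul_of_nonneg_left hLe (by positivity)
    linarith
  refine lt_of_lt_of_le ?_ h7
  have hb := one_add_mul_le_pow (a := -(ε / 8)) (by linarith) 7
  have hb2 : 1 - ε < (1 - ε / 8) ^ 7 := by
    have : (1 + -(ε / 8)) = 1 - ε / 8 := by ring
    rw [this] at hb
    push_cast at hb
    linarith
  have : c / τ * (1 - ε / 8) =
      (1 - ε / 8) ^ 7 / (Real.sqrt (2 * Real.pi) * τ) * Real.exp (-(τ ^ 2 / 2)) := by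
    rw [hc]
    field_simp
  rw [this]
  apply mul_lt_mul_of_pos_right _ (Real.exp_pos _)
  exact div_lt_div_of_pos_right hb2 (by positivity)

/-- The zone boundary. -/
noncomputable def Tz (m : ℕ) : ℝ := Real.sqrt (16 * Real.log m)

lemma Tz_cube (L : ℝ) (hL : 1 ≤ L) :
    Tendsto (fun m : ℕ => (Tz m + L) ^ 3 / Real.sqrt (m:ℝ)) atTop (nhds 0) := by
  have h1 : Tendsto (fun x : ℝ => (4 + L) ^ 3 * (Real.log x ^ 3 / Real.sqrt x)) atTop (nhds 0) := by
    have := (isLittleO_log_rpow_rpow_atTop (s := 1 / 2) 3 (by norm_num)).tendsto_div_nhds_zero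
    have h2 := this.const_mul ((4 + L) ^ 3)
    rw [mul_zero] at h2
    refine h2.congr fun x => ?_
    rw [Real.sqrt_eq_rpow]
    norm_cast
  have h2 := h1.comp tendsto_natCast_atTop_atTop
  refine squeeze_zero' ?_ ?_ h2
  · filter_upwards with m
    have : 0 ≤ Tz m := Real.sqrt_nonneg _
    positivity
  · have hl : ∀ᶠ m : ℕ in atTop, 1 ≤ Real.log (m:ℝ) :=
      (Real.tendsto_log_atTop.comp tendsto_natCast_atTop_atTop).eventually_ge_atTop 1
    filter_upwards [hl] with m hm
    have h3 : Tz m ≤ 4 * Real.log m := by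
      apply Real.sqrt_le_iff.2
      constructor
      · linarith
      · nlinarith
    have h4 : 0 ≤ Tz m := Real.sqrt_nonneg _
    have h5 : (Tz m + L) ^ 3 ≤ ((4 + L) * Real.log m) ^ 3 := by
      apply pow_le_pow_left₀ (by linarith)
      nlinarith
    simp only [Function.comp]
    rw [← mul_div_assoc, ← mul_pow]
    exact div_le_div_of_nonneg_right h5 (Real.sqrt_nonneg _)

lemma Tz_atTop : Tendsto Tz atTop atTop := by
  have h : Tendsto (fun m : ℕ => Real.log (m:ℝ)) atTop atTop :=
    Real.tendsto_log_atTop.comp tendsto_natCast_atTop_atTop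
  exact Real.tendsto_sqrt_atTop.comp (h.const_mul_atTop (by norm_num : (0:ℝ) < 16))

/-- Uniform lower bound for the lower tail of the beta distribution. -/
lemma bF_uniform {ε : ℝ} (hε : 0 < ε) (hε1 : ε < 1) :
    ∃ τ0 : ℝ, 1 ≤ τ0 ∧ ∃ K0 : ℕ, ∀ K : ℕ, K0 ≤ K → ∀ i k : ℕ, K ≤ i + 1 → K ≤ k + 1 →
      τ0 ≤ Tz (min (i + 1) (k + 1)) ∧
      Tz (min (i + 1) (k + 1)) / Real.sqrt ((i:ℝ) + 1) ≤ 1 / 8 ∧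
      Tz (min (i + 1) (k + 1)) / Real.sqrt ((k:ℝ) + 1) ≤ 1 / 8 ∧
      ∀ τ : ℝ, τ0 ≤ τ → τ ≤ Tz (min (i + 1) (k + 1)) →
      (1 - ε) / (Real.sqrt (2 * Real.pi) * τ) * Real.exp (-(τ ^ 2 / 2)) <
      bF i k (betaMean ((i:ℝ) + 1) ((k:ℝ) + 1) - τ * betaSD ((i:ℝ) + 1) ((k:ℝ) + 1)) := by
  set L : ℝ := max 1 (-Real.log (ε / 8)) with hLd
  have hL : 1 ≤ L := le_max_left _ _
  have hLe : Real.exp (-L) ≤ ε / 8 := by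
    rw [← Real.exp_log (show 0 < ε / 8 by linarith)]
    apply Real.exp_le_exp.2
    have := le_max_right 1 (-Real.log (ε / 8))
    linarith
  set τ0 : ℝ := max 1 (4 * L ^ 2 / ε) with hτ0
  have h1τ : 1 ≤ τ0 := le_max_left _ _
  have hτL0 : 4 * L ^ 2 ≤ ε * τ0 := by
    have := le_max_right 1 (4 * L ^ 2 / ε)
    rw [← hτ0, div_le_iff₀ hε] at this
    linarith
  have hpi : 0 < Real.sqrt Real.pi := Real.sqrt_pos.2 Real.pi_pos
  have hρ0 : 0 < 1 - ε / 8 := by linarith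
  have hst : ∀ᶠ m : ℕ in atTop, Stirling.stirlingSeq m ≤ Real.sqrt Real.pi / (1 - ε / 8) := by
    have : Real.sqrt Real.pi < Real.sqrt Real.pi / (1 - ε / 8) := by
      rw [lt_div_iff₀ hρ0]
      nlinarith
    exact (Stirling.tendsto_stirlingSeq_sqrt_pi.eventually_lt_const this).mono fun _ h => h.le
  have hcube : ∀ᶠ m : ℕ in atTop, (Tz m + L) ^ 3 / Real.sqrt (m:ℝ) ≤ ε / 16 :=
    ((Tz_cube L hL).eventually_lt_const (by linarith)).mono fun _ h => h.le
  have hT : ∀ᶠ m : ℕ in atTop, τ0 ≤ Tz m := Tz_atTop.eventually_ge_atTop τ0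
  have hM : ∀ᶠ m : ℕ in atTop, 8 / ε ≤ (m:ℝ) :=
    tendsto_natCast_atTop_atTop.eventually_ge_atTop _
  obtain ⟨K0, hK⟩ := eventually_atTop.1 (hst.and (hcube.and (hT.and hM)))
  refine ⟨τ0, h1τ, K0, fun K hKK i k hi hk => ?_⟩
  obtain ⟨-, c1, c2, -⟩ := hK (min (i + 1) (k + 1)) (by omega)
  obtain ⟨d1, -, -, -⟩ := hK (i + 1) (by omega)
  obtain ⟨e1, -, -, -⟩ := hK (k + 1) (by omega)
  obtain ⟨-, -, -, f1⟩ := hK (i + k + 2) (by omega)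
  have hm0 : 0 < min (i + 1) (k + 1) := by omega
  have hma : ((min (i + 1) (k + 1) : ℕ) : ℝ) ≤ (i:ℝ) + 1 := by
    exact_mod_cast min_le_left (i + 1) (k + 1)
  have hmb : ((min (i + 1) (k + 1) : ℕ) : ℝ) ≤ (k:ℝ) + 1 := by
    exact_mod_cast min_le_right (i + 1) (k + 1)
  generalize min (i + 1) (k + 1) = m at *
  have hsm : 0 < Real.sqrt (m:ℝ) := Real.sqrt_pos.2 (by exact_mod_cast hm0)
  have hT0 : 0 ≤ Tz m := Real.sqrt_nonneg _
  have ca : (Tz m + L) ^ 3 / Real.sqrt ((i:ℝ) + 1) ≤ ε / 16 :=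
    (div_le_div_of_nonneg_left (by positivity) hsm (Real.sqrt_le_sqrt hma)).trans c1
  have cb : (Tz m + L) ^ 3 / Real.sqrt ((k:ℝ) + 1) ≤ ε / 16 :=
    (div_le_div_of_nonneg_left (by positivity) hsm (Real.sqrt_le_sqrt hmb)).trans c1
  have hT3 : Tz m ≤ (Tz m + L) ^ 3 := by
    have h1 : 1 ≤ Tz m + L := by linarith
    have : Tz m + L ≤ (Tz m + L) ^ 3 := by
      nlinarith [mul_nonneg (sub_nonneg.2 h1) (sub_nonneg.2 h1)]
    linarith
  refine ⟨c2, ?_, ?_, ?_⟩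
  · exact ((div_le_div_of_nonneg_right hT3 (Real.sqrt_nonneg _)).trans ca).trans (by linarith)
  · exact ((div_le_div_of_nonneg_right hT3 (Real.sqrt_nonneg _)).trans cb).trans (by linarith)
  · intro τ hτ hτT
    have hτ1 : 1 ≤ τ := h1τ.trans hτ
    refine bF_core hε hε1 hL hLe hτ1 ?_ (S := Tz m + L) (by linarith) ca cb d1 e1 ?_
    · rw [div_le_iff₀ (by positivity)]
      have g1 : ε * τ0 ≤ ε * τ := mul_le_mul_of_nonneg_left hτ hε.le
      have g2 : ε * τ ≤ ε * τ ^ 2 := mul_le_mul_of_nonneg_left (by nlinarith) hε.le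
      linarith
    · rw [div_le_iff₀ hε] at f1
      push_cast at f1
      rw [le_div_iff₀ (by positivity)]
      nlinarith

/-! ### Assembly -/

lemma sum_fin_reflect (n : ℕ) (c : ℕ → ℝ) :
    ∑ i : Fin n, (c i + c (n - 1 - i)) = 2 * ∑ j ∈ Finset.range n, c j := by
  rw [Fin.sum_univ_eq_sum_range (fun j => c j + c (n - 1 - j)) n, Finset.sum_add_distrib,
    Finset.sum_range_reflect]
  ring

/-- Weights for the union bound. -/
noncomputable def wt (K : ℕ) (δ : ℝ) (j : ℕ) : ℝ :=
  (if j < K then δ else 0) + (if K ≤ j + 1 then (((j + 1 : ℕ) : ℝ) ^ 2)⁻¹ else 0)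

lemma wt_nonneg (K : ℕ) {δ : ℝ} (hδ : 0 ≤ δ) (j : ℕ) : 0 ≤ wt K δ j := by
  unfold wt
  split_ifs <;> positivity

lemma wt_sum (K : ℕ) (hK : 1 ≤ K) {δ : ℝ} (hδ : 0 ≤ δ) (n : ℕ) :
    ∑ j ∈ Finset.range n, wt K δ j ≤ K * δ + 2 / K := by
  unfold wt
  rw [Finset.sum_add_distrib]
  apply add_le_add
  · rw [← Finset.sum_filter, Finset.sum_const, nsmul_eq_mul]
    apply mul_le_mul_of_nonneg_right _ hδ
    have : ((Finset.range n).filter (fun j => j < K)).card ≤ (Finset.range K).card := by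
      apply Finset.card_le_card
      intro j hj
      simp only [Finset.mem_filter, Finset.mem_range] at hj ⊢
      exact hj.2
    rw [Finset.card_range] at this
    exact_mod_cast this
  · rw [Finset.range_eq_Ico,
      Finset.sum_Ico_add' (fun m : ℕ => if K ≤ m then ((m : ℝ) ^ 2)⁻¹ else 0) 0 n 1,
      ← Finset.sum_filter]
    have h := sum_Ioo_inv_sq_le (α := ℝ) (K - 1) (n + 1)
    have e : (((K - 1 : ℕ) : ℝ) + 1) = K := by
      have : K - 1 + 1 = K := by omega
      exact_mod_cast this
    rw [e] at h
    refine le_trans ?_ h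
    apply Finset.sum_le_sum_of_subset_of_nonneg
    · intro j hj
      simp only [Finset.mem_filter, Finset.mem_Ico, Finset.mem_Ioo] at hj ⊢
      omega
    · intro j _ _
      positivity

/-- The bad event at index `i`. -/
def badSet (K : ℕ) (δ : ℝ) {n : ℕ} (i : Fin n) : Set (Fin n → ℝ) :=
  {u | ((∀ j, u j ∈ Icc (0:ℝ) 1) ∧ pOrd u i ≤ δ ∧ ((i:ℕ) + 1 < K ∨ n - 1 - (i:ℕ) + 1 < K)) ∨
    (orderStat u i ≤ betaMean (((i:ℕ):ℝ) + 1) (((n - 1 - (i:ℕ) : ℕ):ℝ) + 1) -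
        Tz (min ((i:ℕ) + 1) (n - 1 - (i:ℕ) + 1)) *
          betaSD (((i:ℕ):ℝ) + 1) (((n - 1 - (i:ℕ) : ℕ):ℝ) + 1) ∧
      K ≤ (i:ℕ) + 1 ∧ K ≤ n - 1 - (i:ℕ) + 1)}

lemma badSet_meas {K : ℕ} {δ : ℝ} (hδ : 0 ≤ δ) (hδ1 : δ ≤ 1)
    (hT : ∀ i k : ℕ, K ≤ i + 1 → K ≤ k + 1 →
      Tz (min (i + 1) (k + 1)) / Real.sqrt ((i:ℝ) + 1) ≤ 1 / 8 ∧
      Tz (min (i + 1) (k + 1)) / Real.sqrt ((k:ℝ) + 1) ≤ 1 / 8)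
    {n : ℕ} (i : Fin n) :
    nullMeasure n (badSet K δ i) ≤ ENNReal.ofReal (wt K δ i + wt K δ (n - 1 - i)) := by
  have hn : n = i + (n - 1 - (i:ℕ)) + 1 := by
    have := i.2
    omega
  by_cases hc : (i:ℕ) + 1 < K ∨ n - 1 - (i:ℕ) + 1 < K
  · have hsub : badSet K δ i ⊆ {u | (∀ j, u j ∈ Icc (0:ℝ) 1) ∧ pOrd u i ≤ δ} := by
      rintro u (⟨h1, h2, -⟩ | ⟨-, h2, h3⟩)
      · exact ⟨h1, h2⟩
      · omega
    refine ((measure_mono hsub).trans (pOrd_meas i hn hδ hδ1)).trans ?_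
    apply ENNReal.ofReal_le_ofReal
    rcases hc with hc | hc
    · have h1 : δ ≤ wt K δ i := by
        unfold wt
        rw [if_pos (by omega)]
        have : (0:ℝ) ≤ (if K ≤ (i:ℕ) + 1 then ((((i:ℕ) + 1 : ℕ) : ℝ) ^ 2)⁻¹ else 0) := by
          split_ifs <;> positivity
        linarith
      linarith [wt_nonneg K hδ (n - 1 - i)]
    · generalize n - 1 - (i:ℕ) = k at *
      have h1 : δ ≤ wt K δ k := by
        unfold wt
        rw [if_pos (by omega)]
        have : (0:ℝ) ≤ (if K ≤ k + 1 then (((k + 1 : ℕ) : ℝ) ^ 2)⁻¹ else 0) := by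
          split_ifs <;> positivity
        linarith
      linarith [wt_nonneg K hδ i]
  · push Not at hc
    obtain ⟨hi, hk⟩ := hc
    have hsub : badSet K δ i ⊆ {u | orderStat u i ≤
        betaMean (((i:ℕ):ℝ) + 1) (((n - 1 - (i:ℕ) : ℕ):ℝ) + 1) -
        Tz (min ((i:ℕ) + 1) (n - 1 - (i:ℕ) + 1)) *
          betaSD (((i:ℕ):ℝ) + 1) (((n - 1 - (i:ℕ) : ℕ):ℝ) + 1)} := by
      rintro u (⟨-, -, h3⟩ | ⟨h1, -⟩)
      · omega
      · exact h1
    refine (measure_mono hsub).trans ?_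
    obtain ⟨t1, t2⟩ := hT i (n - 1 - i) hi hk
    obtain ⟨b0, b1, b2⟩ := bF_tail (Real.sqrt_nonneg _) t1 t2
    refine (orderStat_meas i hn b0 b1).trans ?_
    apply ENNReal.ofReal_le_ofReal
    refine b2.trans ?_
    generalize n - 1 - (i:ℕ) = k at *
    have key : ∀ m : ℕ, 1 ≤ m → Real.exp (-(Real.sqrt (16 * Real.log m) ^ 2 / 8)) =
        ((m:ℝ) ^ 2)⁻¹ := by
      intro m hm
      have hm1 : (1:ℝ) ≤ m := by exact_mod_cast hm
      have := Real.log_nonneg hm1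
      rw [Real.sq_sqrt (by positivity),
        show -(16 * Real.log (m:ℝ) / 8) = -(Real.log m + Real.log m) by ring, Real.exp_neg,
        Real.exp_add, Real.exp_log (by linarith), sq]
    rw [key _ (by omega)]
    rcases min_choice ((i:ℕ) + 1) (k + 1) with h | h
    · rw [h]
      have h1 : ((((i:ℕ) + 1 : ℕ) : ℝ) ^ 2)⁻¹ ≤ wt K δ i := by
        unfold wt
        rw [if_pos hi]
        have : (0:ℝ) ≤ (if (i:ℕ) < K then δ else 0) := by split_ifs <;> linarith
        linarith
      linarith [wt_nonneg K hδ k]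
    · rw [h]
      have h1 : (((k + 1 : ℕ) : ℝ) ^ 2)⁻¹ ≤ wt K δ k := by
        unfold wt
        rw [if_pos hk]
        have : (0:ℝ) ≤ (if k < K then δ else 0) := by split_ifs <;> linarith
        linarith
      linarith [wt_nonneg K hδ i]

/-- The good event of the theorem. -/
def goodSet (ε : ℝ) (n : ℕ) : Set (Fin n → ℝ) :=
  {u | ∀ i : Fin n, pOrd u i = MnPlus u →
          (1 - ε) / (Real.sqrt (2 * Real.pi) *
              ((betaMean ((i : ℕ) + 1 : ℝ) ((n : ℝ) - (i : ℕ)) - orderStat u i) /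
                betaSD ((i : ℕ) + 1 : ℝ) ((n : ℝ) - (i : ℕ)))) *
            Real.exp (-((betaMean ((i : ℕ) + 1 : ℝ) ((n : ℝ) - (i : ℕ)) - orderStat u i) /
                betaSD ((i : ℕ) + 1 : ℝ) ((n : ℝ) - (i : ℕ)))^2 / 2) <
            MnPlus u}

lemma good_point {ε ε' τ0 δ : ℝ} {K n : ℕ} (hεε : ε' ≤ ε) (h1τ : 1 ≤ τ0)
    (hδ : δ < (1 - ε') / (Real.sqrt (2 * Real.pi) * τ0) * Real.exp (-(τ0 ^ 2 / 2)))
    (hU : ∀ i k : ℕ, K ≤ i + 1 → K ≤ k + 1 →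
      τ0 ≤ Tz (min (i + 1) (k + 1)) ∧
      Tz (min (i + 1) (k + 1)) / Real.sqrt ((i:ℝ) + 1) ≤ 1 / 8 ∧
      Tz (min (i + 1) (k + 1)) / Real.sqrt ((k:ℝ) + 1) ≤ 1 / 8 ∧
      ∀ τ : ℝ, τ0 ≤ τ → τ ≤ Tz (min (i + 1) (k + 1)) →
      (1 - ε') / (Real.sqrt (2 * Real.pi) * τ) * Real.exp (-(τ ^ 2 / 2)) <
      bF i k (betaMean ((i:ℝ) + 1) ((k:ℝ) + 1) - τ * betaSD ((i:ℝ) + 1) ((k:ℝ) + 1)))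
    {u : Fin n → ℝ} (hu : ∀ j, u j ∈ Icc (0:ℝ) 1) (hM : MnPlus u ≤ δ)
    (hb : ∀ i, u ∉ badSet K δ i) : u ∈ goodSet ε n := by
  intro i hi
  have hn : n = i + (n - 1 - (i:ℕ)) + 1 := by
    have := i.2
    omega
  have hbi := hb i
  simp only [badSet, mem_setOf_eq, not_or, not_and] at hbi
  obtain ⟨hb1, hb2⟩ := hbi
  have hp : pOrd u i ≤ δ := hi.trans_le hM
  have hb1' := hb1 hu hp
  have hpo := pOrd_eq u hu i hn
  have hcast : (n:ℝ) - (i:ℕ) = ((n - 1 - (i:ℕ) : ℕ) : ℝ) + 1 := by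
    have : (n:ℝ) = ((i:ℕ):ℝ) + ((n - 1 - (i:ℕ) : ℕ) : ℝ) + 1 := by exact_mod_cast hn
    linarith
  rw [hcast, ← hi]
  generalize n - 1 - (i:ℕ) = k at *
  have hKi : K ≤ (i:ℕ) + 1 := by omega
  have hKk : K ≤ k + 1 := by omega
  obtain ⟨hτT, hTa, hTb, hlow⟩ := hU i k hKi hKk
  have hx : ¬ orderStat u i ≤ betaMean (((i:ℕ):ℝ) + 1) ((k:ℝ) + 1) -
        Tz (min ((i:ℕ) + 1) (k + 1)) * betaSD (((i:ℕ):ℝ) + 1) ((k:ℝ) + 1) :=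
    fun h => hb2 h hKi hKk
  push Not at hx
  have hos : orderStat u i ∈ Icc (0:ℝ) 1 := hu _
  have hσ : 0 < betaSD (((i:ℕ):ℝ) + 1) ((k:ℝ) + 1) := by
    unfold betaSD
    positivity
  have t0 := bF_tail (i := i) (k := k) (s := τ0) (by linarith)
    ((div_le_div_of_nonneg_right hτT (Real.sqrt_nonneg _)).trans hTa)
    ((div_le_div_of_nonneg_right hτT (Real.sqrt_nonneg _)).trans hTb)
  generalize betaSD (((i:ℕ):ℝ) + 1) ((k:ℝ) + 1) = σ at *
  generalize betaMean (((i:ℕ):ℝ) + 1) ((k:ℝ) + 1) = μ at *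
  generalize hτ : (μ - orderStat u i) / σ = τ
  have hUτ : orderStat u i = μ - τ * σ := by
    rw [← hτ]
    field_simp
    ring
  have hτT' : τ < Tz (min ((i:ℕ) + 1) (k + 1)) := by
    rw [hUτ] at hx
    by_contra hcon
    push Not at hcon
    nlinarith
  have hτ0 : τ0 < τ := by
    by_contra hcon
    push Not at hcon
    have h1 : μ - τ0 * σ ≤ orderStat u i := by
      rw [hUτ]
      nlinarith
    have h2 := (bF_strictMono i k).monotoneOn ⟨t0.1, t0.2.1⟩ hos h1
    have h3 := hlow τ0 le_rfl hτT
    linarith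
  have h4 := hlow τ hτ0.le hτT'.le
  rw [← hUτ, ← hpo] at h4
  refine lt_of_le_of_lt ?_ h4
  rw [neg_div]
  apply mul_le_mul_of_nonneg_right _ (Real.exp_pos _).le
  have : 0 < τ := by linarith
  apply div_le_div_of_nonneg_right (by linarith) (by positivity)

lemma goodSet_compl {ε : ℝ} (hε : 0 < ε) {q : ℝ} (hq : 0 < q) :
    ∀ᶠ n : ℕ in atTop, nullMeasure n (goodSet ε n)ᶜ ≤ ENNReal.ofReal q := by
  set ε' := min ε (1 / 2)
  have hε0 : 0 < ε' := lt_min hε (by norm_num)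
  have hε1 : ε' < 1 := lt_of_le_of_lt (min_le_right _ _) (by norm_num)
  obtain ⟨τ0, h1τ, K0, hK0⟩ := bF_uniform hε0 hε1
  obtain ⟨K1, hK1⟩ := exists_nat_ge (16 / q)
  set K := max K0 (max 1 K1)
  have hKK0 : K0 ≤ K := le_max_left _ _
  have hK1' : 1 ≤ K := (le_max_left _ _).trans (le_max_right _ _)
  have hKq : 16 / q ≤ K :=
    hK1.trans (by exact_mod_cast (le_max_right 1 K1).trans (le_max_right K0 _))
  have hU := hK0 K hKK0
  have hKpos : (0:ℝ) < K := by exact_mod_cast hK1'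
  set κ := (1 - ε') / (Real.sqrt (2 * Real.pi) * τ0) * Real.exp (-(τ0 ^ 2 / 2)) with hκ
  have hκ0 : 0 < κ := by
    have : 0 < 1 - ε' := by linarith
    have : 0 < Real.sqrt (2 * Real.pi) := Real.sqrt_pos.2 (by positivity)
    positivity
  set δ := min (κ / 2) (min 1 (q / (8 * K))) with hδd
  have hδ0 : 0 < δ := by positivity
  have hδκ : δ < κ := lt_of_le_of_lt (min_le_left _ _) (by linarith)
  have hδ1 : δ ≤ 1 := (min_le_right _ _).trans (min_le_left _ _)
  have hδq : δ ≤ q / (8 * K) := (min_le_right _ _).trans (min_le_right _ _)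
  filter_upwards [MnPlus_small δ hδ0 (q / 2) (by linarith)] with n hn
  have hsub : (goodSet ε n)ᶜ ⊆ {u | ¬ ∀ j, u j ∈ Icc (0:ℝ) 1} ∪
      ({u | (∀ j, u j ∈ Icc (0:ℝ) 1) ∧ δ < MnPlus u} ∪ ⋃ i, badSet K δ i) := by
    intro u hu
    by_contra hcon
    simp only [mem_union, mem_setOf_eq, mem_iUnion, not_or, not_not, not_and, not_lt,
      not_exists] at hcon
    obtain ⟨h1, h2, h3⟩ := hcon
    exact hu (good_point (min_le_left _ _) h1τ hδκ hU h1 (h2 h1) h3)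
  have hbad : nullMeasure n (⋃ i, badSet K δ i) ≤ ENNReal.ofReal (q / 2) := by
    calc nullMeasure n (⋃ i, badSet K δ i) ≤ ∑ i, nullMeasure n (badSet K δ i) :=
          measure_iUnion_fintype_le _ _
      _ ≤ ∑ i : Fin n, ENNReal.ofReal (wt K δ i + wt K δ (n - 1 - i)) :=
          Finset.sum_le_sum fun i _ => badSet_meas hδ0.le hδ1
            (fun i k hi hk => ⟨(hU i k hi hk).2.1, (hU i k hi hk).2.2.1⟩) i
      _ = ENNReal.ofReal (∑ i : Fin n, (wt K δ i + wt K δ (n - 1 - i))) := by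
          rw [ENNReal.ofReal_sum_of_nonneg]
          intro i _
          exact add_nonneg (wt_nonneg K hδ0.le _) (wt_nonneg K hδ0.le _)
      _ ≤ ENNReal.ofReal (q / 2) := by
          apply ENNReal.ofReal_le_ofReal
          rw [sum_fin_reflect]
          have h1 := wt_sum K hK1' hδ0.le n
          have h2 : K * δ ≤ q / 8 := by
            rw [le_div_iff₀ (by positivity)] at hδq
            linarith
          have h3 : 2 / (K:ℝ) ≤ q / 8 := by
            rw [div_le_iff₀ hq] at hKq
            rw [div_le_iff₀ hKpos]
            linarith
          linarith
  calc nullMeasure n (goodSet ε n)ᶜ ≤ _ := measure_mono hsub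
    _ ≤ nullMeasure n {u | ¬ ∀ j, u j ∈ Icc (0:ℝ) 1} +
        (nullMeasure n {u | (∀ j, u j ∈ Icc (0:ℝ) 1) ∧ δ < MnPlus u} +
          nullMeasure n (⋃ i, badSet K δ i)) :=
        (measure_union_le _ _).trans (by gcongr; exact measure_union_le _ _)
    _ ≤ 0 + (ENNReal.ofReal (q / 2) + ENNReal.ofReal (q / 2)) := by
        rw [nullMeasure_cube n]
        gcongr
    _ = ENNReal.ofReal q := by
        rw [zero_add, ← ENNReal.ofReal_add (by linarith) (by linarith)]
        congr 1
        ring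

lemma goodSet_tendsto {ε : ℝ} (hε : 0 < ε) :
    Tendsto (fun n : ℕ => ((nullMeasure n) (goodSet ε n)).toReal) atTop (nhds 1) := by
  rw [tendsto_order]
  constructor
  · intro a ha
    filter_upwards [goodSet_compl hε (show 0 < (1 - a) / 2 by linarith)] with n hn
    have h1 : 1 ≤ nullMeasure n (goodSet ε n) + nullMeasure n (goodSet ε n)ᶜ := by
      have := measure_union_le (μ := nullMeasure n) (goodSet ε n) (goodSet ε n)ᶜ
      rwa [union_compl_self, measure_univ] at this
    have h2 := h1.trans (add_le_add_right hn _)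
    have h3 := ENNReal.toReal_mono (by simp) h2
    rw [ENNReal.toReal_add (measure_ne_top _ _) (by simp), ENNReal.toReal_one,
      ENNReal.toReal_ofReal (by linarith)] at h3
    linarith
  · intro a ha
    filter_upwards with n
    refine lt_of_le_of_lt ?_ ha
    have := ENNReal.toReal_mono (by simp) (prob_le_one (μ := nullMeasure n) (s := goodSet ε n))
    simpa using this

theorem berk_jones_MnPlus_lower_bound_tau (ε : ℝ) (hε : 0 < ε) :
    Filter.Tendsto (fun n : ℕ =>
        ((nullMeasure n) {u | ∀ i : Fin n, pOrd u i = MnPlus u →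
          (1 - ε) / (Real.sqrt (2 * Real.pi) *
              ((betaMean ((i : ℕ) + 1 : ℝ) ((n : ℝ) - (i : ℕ)) - orderStat u i) /
                betaSD ((i : ℕ) + 1 : ℝ) ((n : ℝ) - (i : ℕ)))) *
            Real.exp (-((betaMean ((i : ℕ) + 1 : ℝ) ((n : ℝ) - (i : ℕ)) - orderStat u i) /
                betaSD ((i : ℕ) + 1 : ℝ) ((n : ℝ) - (i : ℕ)))^2 / 2) <
            MnPlus u}).toReal)
      Filter.atTop (nhds 1) := by
  exact goodSet_tendsto hε
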